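/- arXiv:2602.05790 — 3 statements merged into one kernel-verified Lean document; each statement's English description precedes it below -/
import Mathlib

section
/- Fix constants R*, ε, η, α > 0, and set β = 0 if α < 1/4, otherwise fix any constant β > α − 1/4. There exist n₀ = n₀(ε, η, R*, α) and a constant c = c(ε, η, R*, α) such that for every n ≥ n₀ there are a rate R ≤ R* + ε, an encoder f : ℝⁿ × 𝕊₊ⁿ × [0,1] → {1,…,⌊2^{nR}⌋}, a decoder g : {1,…,⌊2^{nR}⌋} × [0,1] → ℝⁿ, and a random variable S ∈ [0,1] such that for every pair (W, Σ) admissible with parameter α (Σ = UΛUᵀ, λ the diagonal of Λ), setting Ŵ = g(f(W, Σ, S), S): Pr_S[(1/n) d_Σ(W, Ŵ) ≤ 𝐃_rc^λ(UᵀW, R*) + n^{2β} η] ≥ 1 − exp(−2^{nε(1 − c n^{4(α−β)−1})}). -/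
open MeasureTheory Matrix Real

/-- Distortion `d_Σ(w, v) = (w - v)ᵀ Σ (w - v)`. -/
noncomputable def dSig {n : ℕ} (Sig : Matrix (Fin n) (Fin n) ℝ) (w v : Fin n → ℝ) : ℝ :=
  (w - v) ⬝ᵥ Sig.mulVec (w - v)

/-- Random-coding rate `R_rc(λ, T) = (1/(2n)) Σᵢ log₂(1 + λᵢ T)`. -/
noncomputable def Rrc {n : ℕ} (lam : Fin n → ℝ) (T : ℝ) : ℝ :=
  (1 / (2 * (n : ℝ))) * ∑ i, Real.logb 2 (1 + lam i * T)

/-- `T_rc(λ, R)`: the unique `T > 0` with `R_rc(λ, T) = R`. -/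
noncomputable def Trc {n : ℕ} (lam : Fin n → ℝ) (R : ℝ) : ℝ :=
  Classical.epsilon fun T => 0 < T ∧ Rrc lam T = R

/-- General random-coding distortion `D_rc^λ(V, T) = (1/n) Σᵢ Vᵢ² λᵢ/(1 + λᵢ T)`. -/
noncomputable def DrcV {n : ℕ} (lam V : Fin n → ℝ) (T : ℝ) : ℝ :=
  (1 / (n : ℝ)) * ∑ i, (V i) ^ 2 * lam i / (1 + lam i * T)

/-- `𝐃_rc^λ(V, R) = D_rc^λ(V, T_rc(λ, R))`. -/
noncomputable def DDrcV {n : ℕ} (lam V : Fin n → ℝ) (R : ℝ) : ℝ :=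
  DrcV lam V (Trc lam R)

/-!
The codewords are drawn independently from a centred Gaussian law and the encoder picks the best
one, so everything rests on a lower bound of order `2 ^ (-n R)` for the probability that a single
codeword meets the distortion target. In the eigenbasis of `Σ` the distortion `d` of a codeword of
variance `v` is a weighted sum of squares of independent normal variables. Tilting its law by
`exp (-T d / (2 v))` makes the exponent `n R_rc(λ, T)` appear, and the tilted mean equals
`n D_rc^λ(V, T)` for the right choice of `v`, which depends on `λ` and `V = Uᵀ W`. The decoder
does not know these, so the variance of each codeword is itself drawn from a finite grid, at the
cost of a factor polynomial in `n`. When `β > α`, the slack `n ^ (2 β) η` eventually exceeds the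
distortion of the zero word.
-/

namespace RandomCoding

open ProbabilityTheory Filter Finset
open scoped NNReal ENNReal

section Tilting

variable {Ω : Type*} {mΩ : MeasurableSpace Ω} {X : Ω → ℝ} {s b t : ℝ}

/- Beyond `b` the term `(1 + u) * y ^ 2 / b ^ 2` beats the constant `1 + u` and
`s * y ^ 2 / b` beats `s * y`; up to `b` the tangent line of `exp` already suffices. -/
lemma quadratic_le_indicator_exp {u : ℝ} (hs : 0 ≤ s) (hu : 0 ≤ u) (hb : 0 < b) (y : ℝ) :
    1 + u + s * y - ((1 + u) / b ^ 2 + s / b) * y ^ 2 ≤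
      (Set.Iic b).indicator (fun y ↦ exp (u + s * y)) y := by
  have hquad : ((1 + u) / b ^ 2 + s / b) * y ^ 2 =
      (1 + u) * (y / b) ^ 2 + s * (y * (y / b)) := by field_simp
  by_cases hy : y ≤ b
  · rw [Set.indicator_of_mem (Set.mem_Iic.2 hy)]
    have htangent := add_one_le_exp (u + s * y)
    have hnonneg : 0 ≤ ((1 + u) / b ^ 2 + s / b) * y ^ 2 := by positivity
    linarith
  · rw [Set.indicator_of_notMem (by simpa using hy), hquad]
    have hratio : 1 ≤ y / b := (one_le_div hb).2 (not_le.1 hy).le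
    have hy_pos : 0 ≤ y := (hb.trans (not_le.1 hy)).le
    have hconst : 1 + u ≤ (1 + u) * (y / b) ^ 2 :=
      le_mul_of_one_le_right (by positivity) (one_le_pow₀ hratio)
    have hlinear : s * y ≤ s * (y * (y / b)) := by
      gcongr
      exact le_mul_of_one_le_right hy_pos hratio
    linarith

lemma integral_quadratic_centered {Q : Measure Ω} [IsProbabilityMeasure Q] (hX : MemLp X 2 Q)
    (p s c : ℝ) :
    ∫ ω, (p + s * (X ω - Q[X]) - c * (X ω - Q[X]) ^ 2) ∂Q = p - c * Var[X; Q] := by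
  have hX1 : Integrable X Q := hX.integrable one_le_two
  have hX2 : Integrable (fun ω ↦ (X ω - Q[X]) ^ 2) Q := (hX.sub (memLp_const _)).integrable_sq
  rw [integral_sub (by fun_prop) (by fun_prop), integral_add (by fun_prop) (by fun_prop),
    integral_const_mul, integral_const_mul, integral_sub hX1 (integrable_const _),
    ← variance_eq_integral hX.aemeasurable]
  simp

lemma half_exp_le_setIntegral_exp {Q : Measure Ω} [IsProbabilityMeasure Q] (hXm : Measurable X)
    (hX : MemLp X 2 Q) (hs : 0 ≤ s) (hb : 0 < b) (hvar : Var[X; Q] ≤ b ^ 2 / 2) :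
    exp (-(2 * s * Var[X; Q] / b)) / 2 ≤
      ∫ ω in {ω | X ω ≤ Q[X] + b}, exp (s * (X ω - Q[X])) ∂Q := by
  set m := Q[X]
  set v := Var[X; Q]
  set u := 2 * s * v / b with hu
  set A := {ω | X ω ≤ m + b}
  have hv0 : 0 ≤ v := variance_nonneg X Q
  have hu0 : 0 ≤ u := by positivity
  have hA : MeasurableSet A := measurableSet_le hXm measurable_const
  have hX1 : Integrable X Q := hX.integrable one_le_two
  have hX2 : Integrable (fun ω ↦ (X ω - m) ^ 2) Q := (hX.sub (memLp_const m)).integrable_sq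
  have hhalf : 1 / 2 ≤ 1 + u - ((1 + u) / b ^ 2 + s / b) * v := by
    have hexpand : ((1 + u) / b ^ 2 + s / b) * v = (1 + u) * (v / b ^ 2) + u / 2 := by
      rw [hu]; field_simp
    have hratio : v / b ^ 2 ≤ 1 / 2 := by rw [div_le_iff₀ (by positivity)]; linarith
    have hscaled : (1 + u) * (v / b ^ 2) ≤ (1 + u) * (1 / 2) := by gcongr
    linarith
  have hint : IntegrableOn (fun ω ↦ exp (u + s * (X ω - m))) A Q := by
    refine Integrable.of_bound (C := exp (u + s * b)) (by fun_prop) ?_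
    refine (ae_restrict_iff' hA).2 (ae_of_all _ fun ω hω ↦ ?_)
    rw [norm_of_nonneg (exp_nonneg _), exp_le_exp]
    gcongr
    linarith [hω.out]
  have hexp : 1 / 2 ≤ ∫ ω in A, exp (u + s * (X ω - m)) ∂Q := by
    rw [← integral_indicator hA]
    refine (hhalf.trans_eq (integral_quadratic_centered hX _ s _).symm).trans
      (integral_mono (by fun_prop) (hint.integrable_indicator hA) fun ω ↦ ?_)
    refine (quadratic_le_indicator_exp hs hu0 hb (X ω - m)).trans_eq ?_
    simp only [A, Set.indicator, Set.mem_Iic, Set.mem_ofPred_eq, sub_le_iff_le_add']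
  calc exp (-u) / 2 ≤ exp (-u) * ∫ ω in A, exp (u + s * (X ω - m)) ∂Q := by
        rw [div_eq_mul_one_div]; gcongr
    _ = ∫ ω in A, exp (s * (X ω - m)) ∂Q := by
        rw [← integral_const_mul]; simp only [← exp_add, neg_add_cancel_left]

variable {P : Measure Ω}

lemma Iic_subset_integrableExpSet [IsFiniteMeasure P] (hXm : AEMeasurable X P) (hX : 0 ≤ᵐ[P] X) :
    Set.Iic 0 ⊆ integrableExpSet X P := by
  intro t ht
  refine Integrable.of_bound (C := 1) (by fun_prop) (hX.mono fun ω hω ↦ ?_)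
  rw [norm_of_nonneg (exp_nonneg _), exp_le_one_iff]
  exact mul_nonpos_of_nonpos_of_nonneg ht hω

lemma half_exp_le_measureReal_le [NeZero P] (hXm : Measurable X)
    (ht : t ∈ interior (integrableExpSet X P)) (ht0 : t ≤ 0) (hb : 0 < b)
    (hvar : iteratedDeriv 2 (cgf X P) t ≤ b ^ 2 / 2) :
    exp (cgf X P t - t * deriv (cgf X P) t + 2 * t * iteratedDeriv 2 (cgf X P) t / b) / 2 ≤
      P.real {ω | X ω ≤ deriv (cgf X P) t + b} := by
  have hint : Integrable (fun ω ↦ exp (t * X ω)) P := interior_subset (s := integrableExpSet X P) ht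
  have := isProbabilityMeasure_tilted hint
  set κ := cgf X P t
  rw [← variance_tilted_mul ht] at hvar ⊢
  rw [← integral_tilted_mul_self ht]
  set Q := P.tilted (t * X ·)
  set m := Q[X]
  have hA : MeasurableSet {ω | X ω ≤ m + b} := measurableSet_le hXm measurable_const
  have hchange : P.real {ω | X ω ≤ m + b} =
      ∫ ω in {ω | X ω ≤ m + b}, exp (κ - t * m) * exp (-t * (X ω - m)) ∂Q := by
    rw [setIntegral_tilted_mul_eq_cgf' _ hA hint, ← setIntegral_one_eq_measureReal]
    refine setIntegral_congr_fun hA fun ω _ ↦ ?_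
    rw [smul_eq_mul, ← exp_add, ← exp_add, eq_comm, exp_eq_one_iff]
    ring
  rw [hchange, integral_const_mul]
  calc exp (κ - t * m + 2 * t * Var[X; Q] / b) / 2
      = exp (κ - t * m) * (exp (-(2 * -t * Var[X; Q] / b)) / 2) := by
        rw [← mul_div_assoc, ← exp_add]; ring_nf
    _ ≤ _ := by
        gcongr
        exact half_exp_le_setIntegral_exp hXm (memLp_tilted_mul ht 2) (neg_nonneg.2 ht0) hb hvar

end Tilting

section ScalarGaussian

variable {lam μ t : ℝ} {v : ℝ≥0}

lemma mgf_sq_gaussianReal (ht : 2 * v * t < 1) :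
    mgf (fun x ↦ x ^ 2) (gaussianReal μ v) t =
      (√(1 - 2 * v * t))⁻¹ * exp (t * μ ^ 2 / (1 - 2 * v * t)) := by
  rcases eq_or_ne v 0 with rfl | hv
  · simp [mgf]
  have : (0 : ℝ) < v := by positivity
  set r := 1 - 2 * v * t with hr_def
  have hr : 0 < r := by linarith
  have ht_eq : t = (1 - r) / (2 * v) := by rw [hr_def]; field_simp; ring
  have complete_square (x : ℝ) :
      (√(2 * π * v))⁻¹ * exp (-(x - μ) ^ 2 / (2 * v)) * exp (t * x ^ 2) =
        ((√(2 * π * v))⁻¹ * exp (t * μ ^ 2 / r)) * exp (-(r / (2 * v)) * (x - μ / r) ^ 2) := by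
    rw [mul_assoc (√(2 * π * v))⁻¹, mul_assoc (√(2 * π * v))⁻¹, ← exp_add, ← exp_add, ht_eq]
    congr 2
    field_simp
    ring
  have hsqrt : √(π / (r / (2 * v))) = √(2 * π * v) * (√r)⁻¹ := by
    rw [← sqrt_inv, ← sqrt_mul (by positivity)]
    congr 1
    field_simp
  simp only [mgf, integral_gaussianReal_eq_integral_smul hv, gaussianPDFReal, smul_eq_mul,
    complete_square]
  rw [integral_const_mul, integral_sub_right_eq_self (fun x ↦ exp (-(r / (2 * v)) * x ^ 2)),
    integral_gaussian, hsqrt]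
  field_simp

/-- The cumulant generating function of `lam * y ^ 2` for `y` normal with mean `μ` and
variance `v`, a scaled noncentral chi-squared variable. -/
noncomputable def sqCgf (lam μ v t : ℝ) : ℝ :=
  -(1 / 2) * log (1 - 2 * lam * v * t) + t * lam * μ ^ 2 / (1 - 2 * lam * v * t)

lemma cgf_const_mul_sq_gaussianReal (ht : 2 * lam * v * t < 1) :
    cgf (fun x ↦ lam * x ^ 2) (gaussianReal μ v) t = sqCgf lam μ v t := by
  have hr : 0 < 1 - 2 * lam * v * t := by linarith
  have hscale : 1 - 2 * v * (lam * t) = 1 - 2 * lam * v * t := by ring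
  rw [cgf, mgf_const_mul, mgf_sq_gaussianReal (by linarith), hscale,
    log_mul (by positivity) (by positivity), log_exp, log_inv, log_sqrt hr.le, sqCgf]
  ring

end ScalarGaussian

section SqCgfDerivatives

variable {lam μ v t : ℝ}

lemma hasDerivAt_one_sub_mul : HasDerivAt (fun t ↦ 1 - 2 * lam * v * t) (-(2 * lam * v)) t := by
  simpa using ((hasDerivAt_id t).const_mul (2 * lam * v)).const_sub 1

lemma hasDerivAt_sqCgf (hr : 1 - 2 * lam * v * t ≠ 0) :
    HasDerivAt (sqCgf lam μ v)
      (lam * v / (1 - 2 * lam * v * t) + lam * μ ^ 2 / (1 - 2 * lam * v * t) ^ 2) t := by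
  have hlog := (hasDerivAt_one_sub_mul.log hr).const_mul (-(1 / 2))
  have hquot := (((hasDerivAt_id t).mul_const lam).mul_const (μ ^ 2)).div hasDerivAt_one_sub_mul hr
  refine (hlog.add hquot).congr_deriv ?_
  simp only [id]
  field_simp
  ring

lemma hasDerivAt_deriv_sqCgf (hr : 1 - 2 * lam * v * t ≠ 0) :
    HasDerivAt
      (fun t ↦ lam * v / (1 - 2 * lam * v * t) + lam * μ ^ 2 / (1 - 2 * lam * v * t) ^ 2)
      (2 * lam ^ 2 * v ^ 2 / (1 - 2 * lam * v * t) ^ 2 +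
        4 * lam ^ 2 * v * μ ^ 2 / (1 - 2 * lam * v * t) ^ 3) t := by
  have hinv := (hasDerivAt_const t (lam * v)).div hasDerivAt_one_sub_mul hr
  have hinv_sq := (hasDerivAt_const t (lam * μ ^ 2)).div
    (hasDerivAt_one_sub_mul.fun_pow 2) (pow_ne_zero 2 hr)
  refine (hinv.add hinv_sq).congr_deriv ?_
  field_simp
  ring

end SqCgfDerivatives

section GaussianVector

variable {ι : Type*} [Fintype ι] {lam m : ι → ℝ} {v : ℝ≥0}

/-- The normal law on `ι → ℝ` with mean `m` and covariance `v • 1`. -/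
noncomputable abbrev gaussianVec (m : ι → ℝ) (v : ℝ≥0) : Measure (ι → ℝ) :=
  Measure.pi fun i ↦ gaussianReal (m i) v

lemma charFun_gaussianVec_zero (t : EuclideanSpace ℝ ι) :
    charFun ((gaussianVec 0 v).map (WithLp.toLp 2)) t =
      Complex.exp (-(v * (t.ofLp ⬝ᵥ t.ofLp : ℝ) / 2)) := by
  simp_rw [charFun_pi, charFun_gaussianReal, ← Complex.exp_sum]
  simp only [dotProduct, Pi.zero_apply]
  push_cast
  rw [mul_sum, sum_div, ← sum_neg_distrib]
  congr! 2 with i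
  ring

lemma map_transpose_mulVec_gaussianVec_zero [DecidableEq ι] {U : Matrix ι ι ℝ}
    (hU : U * Uᵀ = 1) (v : ℝ≥0) :
    (gaussianVec 0 v).map (Uᵀ *ᵥ ·) = gaussianVec 0 v := by
  have hmeas : Measurable (fun x : ι → ℝ ↦ Uᵀ *ᵥ x) := by fun_prop
  apply (MeasurableEquiv.toLp 2 (ι → ℝ)).map_measurableEquiv_injective
  apply Measure.ext_of_charFun (E := EuclideanSpace ℝ ι)
  ext t
  have hnorm : (U *ᵥ t.ofLp) ⬝ᵥ (U *ᵥ t.ofLp) = t.ofLp ⬝ᵥ t.ofLp := by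
    rw [dotProduct_mulVec, vecMul_mulVec, dotProduct_comm, mul_eq_one_comm.1 hU, vecMul_one]
  have hrotated := charFun_gaussianVec_zero (v := v) (WithLp.toLp 2 (U *ᵥ t.ofLp))
  rw [WithLp.ofLp_toLp, hnorm] at hrotated
  rw [MeasurableEquiv.coe_toLp, charFun_gaussianVec_zero, Measure.map_map (by fun_prop) hmeas,
    ← hrotated, charFun_apply, charFun_apply, integral_map (by fun_prop) (by fun_prop),
    integral_map (by fun_prop) (by fun_prop)]
  congr! 4 with x
  simp only [Function.comp, EuclideanSpace.inner_eq_star_dotProduct, star_trivial]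
  rw [dotProduct_mulVec, vecMul_transpose]

lemma map_const_sub_gaussianVec_zero (m : ι → ℝ) (v : ℝ≥0) :
    (gaussianVec 0 v).map (m - ·) = gaussianVec m v := by
  have hcoord (i : ι) : (gaussianReal ((0 : ι → ℝ) i) v).map (m i - ·) = gaussianReal (m i) v := by
    rw [gaussianReal_map_const_sub, Pi.zero_apply, sub_zero]
  have (i : ι) : SigmaFinite ((gaussianReal ((0 : ι → ℝ) i) v).map (m i - ·)) := by
    rw [hcoord]; infer_instance
  have hpi := Measure.pi_map_pi (μ := fun i ↦ gaussianReal ((0 : ι → ℝ) i) v)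
    (f := fun i x ↦ m i - x) fun i ↦ by fun_prop
  simp only [hcoord] at hpi
  exact hpi

lemma map_transpose_mulVec_sub_gaussianVec_zero [DecidableEq ι] {U : Matrix ι ι ℝ}
    (hU : U * Uᵀ = 1) (w : ι → ℝ) (v : ℝ≥0) :
    (gaussianVec 0 v).map (fun x ↦ Uᵀ *ᵥ (w - x)) = gaussianVec (Uᵀ *ᵥ w) v := by
  have hcomp : (fun x ↦ Uᵀ *ᵥ (w - x)) = (Uᵀ *ᵥ w - ·) ∘ (Uᵀ *ᵥ ·) := by
    ext1 x; exact mulVec_sub ..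
  rw [hcomp, ← Measure.map_map (by fun_prop) (by fun_prop),
    map_transpose_mulVec_gaussianVec_zero hU, map_const_sub_gaussianVec_zero]

lemma cgf_sum_mul_sq_gaussianVec (hlam : ∀ i, 0 ≤ lam i) {t : ℝ} (ht : t ≤ 0) :
    cgf (fun y ↦ ∑ i, lam i * y i ^ 2) (gaussianVec m v) t = ∑ i, sqCgf (lam i) (m i) v t := by
  have hindep : iIndepFun (fun i (y : ι → ℝ) ↦ lam i * y i ^ 2) (gaussianVec m v) :=
    iIndepFun_pi (X := fun i x ↦ lam i * x ^ 2) fun i ↦ by fun_prop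
  have hint (i : ι) : Integrable (fun y : ι → ℝ ↦ exp (t * (lam i * y i ^ 2))) (gaussianVec m v) :=
    Iic_subset_integrableExpSet (Measurable.aemeasurable (by fun_prop))
      (ae_of_all _ fun y ↦ mul_nonneg (hlam i) (sq_nonneg _)) ht
  have hsum : (fun y : ι → ℝ ↦ ∑ i, lam i * y i ^ 2) = ∑ i, fun y ↦ lam i * y i ^ 2 := by
    ext y; simp
  rw [hsum, hindep.cgf_sum (fun i ↦ by fun_prop) fun i _ ↦ hint i]
  refine sum_congr rfl fun i _ ↦ ?_
  have hmarginal := measurePreserving_eval (fun i ↦ gaussianReal (m i) v) i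
  have hr : 2 * lam i * v * t ≤ 0 :=
    mul_nonpos_of_nonneg_of_nonpos (by have := hlam i; positivity) ht
  rw [← cgf_const_mul_sq_gaussianReal (by linarith), cgf, cgf, ← hmarginal.map_eq,
    mgf_map hmarginal.aemeasurable (by fun_prop)]
  rfl

end GaussianVector

section TiltedGaussian

variable {ι : Type*} [Fintype ι] {lam m : ι → ℝ} {v : ℝ≥0} {T b : ℝ}

/-- The mean of `∑ i, lam i * y i ^ 2` when `gaussianVec m v` is tilted by
`exp (-(T / (2 * v)) * ∑ i, lam i * y i ^ 2)`. -/
noncomputable def tiltedMean (lam m : ι → ℝ) (v T : ℝ) : ℝ :=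
  ∑ i, (lam i * v / (1 + lam i * T) + lam i * m i ^ 2 / (1 + lam i * T) ^ 2)

/-- The variance of `∑ i, lam i * y i ^ 2` when `gaussianVec m v` is tilted by
`exp (-(T / (2 * v)) * ∑ i, lam i * y i ^ 2)`. -/
noncomputable def tiltedVar (lam m : ι → ℝ) (v T : ℝ) : ℝ :=
  ∑ i, (2 * lam i ^ 2 * v ^ 2 / (1 + lam i * T) ^ 2 +
    4 * lam i ^ 2 * v * m i ^ 2 / (1 + lam i * T) ^ 3)

lemma one_sub_mul_neg_div {l v : ℝ} (hv : v ≠ 0) (T : ℝ) :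
    1 - 2 * l * v * -(T / (2 * v)) = 1 + l * T := by
  field_simp
  ring

lemma one_sub_mul_ne_zero {l t : ℝ} (hl : 0 ≤ l) (ht : t < 0) : 1 - 2 * l * v * t ≠ 0 := by
  have : 2 * l * v * t ≤ 0 := mul_nonpos_of_nonneg_of_nonpos (by positivity) ht.le
  linarith

lemma deriv_cgf_sum_mul_sq (hlam : ∀ i, 0 ≤ lam i) {t : ℝ} (ht : t < 0) :
    deriv (cgf (fun y ↦ ∑ i, lam i * y i ^ 2) (gaussianVec m v)) t =
      ∑ i, (lam i * v / (1 - 2 * lam i * v * t) +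
        lam i * m i ^ 2 / (1 - 2 * lam i * v * t) ^ 2) := by
  rw [EventuallyEq.deriv_eq <| eventuallyEq_of_mem (Iio_mem_nhds ht) fun t ht ↦
    cgf_sum_mul_sq_gaussianVec hlam (le_of_lt ht)]
  exact (HasDerivAt.fun_sum fun i _ ↦ hasDerivAt_sqCgf (one_sub_mul_ne_zero (hlam i) ht)).deriv

lemma iteratedDeriv_two_cgf_sum_mul_sq (hlam : ∀ i, 0 ≤ lam i) {t : ℝ} (ht : t < 0) :
    iteratedDeriv 2 (cgf (fun y ↦ ∑ i, lam i * y i ^ 2) (gaussianVec m v)) t =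
      ∑ i, (2 * lam i ^ 2 * v ^ 2 / (1 - 2 * lam i * v * t) ^ 2 +
        4 * lam i ^ 2 * v * m i ^ 2 / (1 - 2 * lam i * v * t) ^ 3) := by
  rw [iteratedDeriv_succ, iteratedDeriv_one, EventuallyEq.deriv_eq <|
    eventuallyEq_of_mem (Iio_mem_nhds ht) fun t ht ↦ deriv_cgf_sum_mul_sq hlam ht]
  exact (HasDerivAt.fun_sum fun i _ ↦
    hasDerivAt_deriv_sqCgf (one_sub_mul_ne_zero (hlam i) ht)).deriv

lemma half_exp_le_gaussianVec_le_tiltedMean (hlam : ∀ i, 0 ≤ lam i) (hv : v ≠ 0) (hT : 0 < T)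
    (hb : 0 < b) (hvar : tiltedVar lam m v T ≤ b ^ 2 / 2) :
    exp (-(1 / 2) * ∑ i, log (1 + lam i * T) +
      T / (2 * v) * (tiltedMean lam m v T - ∑ i, m i ^ 2 * lam i / (1 + lam i * T)) -
        T / v * tiltedVar lam m v T / b) / 2 ≤
      (gaussianVec m v).real {y | ∑ i, lam i * y i ^ 2 ≤ tiltedMean lam m v T + b} := by
  have hv_pos : (0 : ℝ) < v := by positivity
  set t : ℝ := -(T / (2 * v)) with ht_def
  have ht : t < 0 := neg_neg_of_pos (by positivity)
  have hden (i : ι) : 1 - 2 * lam i * v * t = 1 + lam i * T := one_sub_mul_neg_div hv_pos.ne' T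
  have hcgf := cgf_sum_mul_sq_gaussianVec (m := m) (v := v) hlam ht.le
  have hmean := deriv_cgf_sum_mul_sq (m := m) (v := v) hlam ht
  have hvariance := iteratedDeriv_two_cgf_sum_mul_sq (m := m) (v := v) hlam ht
  simp only [sqCgf, hden, sum_add_distrib, ← mul_sum] at hcgf
  simp only [hden] at hmean hvariance
  rw [← tiltedMean] at hmean
  rw [← tiltedVar] at hvariance
  have hmem : t ∈ interior (integrableExpSet (fun y ↦ ∑ i, lam i * y i ^ 2) (gaussianVec m v)) :=
    interior_mono (Iic_subset_integrableExpSet (Measurable.aemeasurable (by fun_prop))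
      (ae_of_all _ fun y ↦ sum_nonneg fun i _ ↦ mul_nonneg (hlam i) (sq_nonneg _)))
      (by rwa [interior_Iic])
  have key := half_exp_le_measureReal_le (by fun_prop) hmem ht.le hb (by rwa [hvariance])
  rw [hcgf, hmean, hvariance] at key
  refine le_of_eq_of_le ?_ key
  have hquad : ∑ i, t * lam i * m i ^ 2 / (1 + lam i * T) =
      t * ∑ i, m i ^ 2 * lam i / (1 + lam i * T) := by
    rw [mul_sum]; congr! 1 with i; ring
  have hTv : T / v = 2 * (T / (2 * v)) := by field_simp
  rw [hquad, hTv, ht_def]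
  congr 2
  ring

end TiltedGaussian

section MatchedVariance

variable {ι : Type*} [Fintype ι] {lam m : ι → ℝ} {v T a b δ : ℝ}

/-- The variance `v` at which `tiltedMean lam m v T` equals
`∑ i, m i ^ 2 * lam i / (1 + lam i * T)`; it is `0` when all `lam i` vanish. -/
noncomputable def matchedVariance (lam m : ι → ℝ) (T : ℝ) : ℝ :=
  T * (∑ i, m i ^ 2 * lam i ^ 2 / (1 + lam i * T) ^ 2) / ∑ i, lam i / (1 + lam i * T)

lemma mul_sum_sq_div_le_mul_sum_div (hlam : ∀ i, 0 ≤ lam i) (hT : 0 ≤ T) (hm : ∀ i, m i ^ 2 ≤ a) :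
    T * ∑ i, m i ^ 2 * lam i ^ 2 / (1 + lam i * T) ^ 2 ≤ a * ∑ i, lam i / (1 + lam i * T) := by
  rw [mul_sum, mul_sum]
  refine sum_le_sum fun i _ ↦ ?_
  have hl := hlam i
  have hshrink : lam i * T / (1 + lam i * T) ≤ 1 := div_le_one_of_le₀ (by linarith) (by positivity)
  calc T * (m i ^ 2 * lam i ^ 2 / (1 + lam i * T) ^ 2)
      = m i ^ 2 * (lam i / (1 + lam i * T)) * (lam i * T / (1 + lam i * T)) := by field_simp
    _ ≤ m i ^ 2 * (lam i / (1 + lam i * T)) := mul_le_of_le_one_right (by positivity) hshrink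
    _ ≤ a * (lam i / (1 + lam i * T)) := by gcongr; exact hm i

lemma matchedVariance_nonneg (hlam : ∀ i, 0 ≤ lam i) (hT : 0 ≤ T) : 0 ≤ matchedVariance lam m T :=
  div_nonneg (mul_nonneg hT (sum_nonneg fun i _ ↦ by positivity))
    (sum_nonneg fun i _ ↦ by have := hlam i; positivity)

lemma matchedVariance_le (hlam : ∀ i, 0 ≤ lam i) (hT : 0 ≤ T) (ha : 0 ≤ a)
    (hm : ∀ i, m i ^ 2 ≤ a) : matchedVariance lam m T ≤ a :=
  div_le_of_le_mul₀ (sum_nonneg fun i _ ↦ by have := hlam i; positivity) ha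
    (mul_sum_sq_div_le_mul_sum_div hlam hT hm)

lemma matchedVariance_mul_sum (hlam : ∀ i, 0 ≤ lam i) (hT : 0 ≤ T) :
    matchedVariance lam m T * ∑ i, lam i / (1 + lam i * T) =
      T * ∑ i, m i ^ 2 * lam i ^ 2 / (1 + lam i * T) ^ 2 := by
  refine div_mul_cancel_of_imp fun hzero ↦ ?_
  have hle := mul_sum_sq_div_le_mul_sum_div (a := ∑ i, m i ^ 2) hlam hT fun i ↦
    single_le_sum (f := fun i ↦ m i ^ 2) (fun i _ ↦ sq_nonneg _) (mem_univ i)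
  rw [hzero, mul_zero] at hle
  exact hle.antisymm (mul_nonneg hT (sum_nonneg fun i _ ↦ by positivity))

lemma tiltedMean_eq (hlam : ∀ i, 0 ≤ lam i) (hT : 0 ≤ T) (v : ℝ) :
    tiltedMean lam m v T = ∑ i, m i ^ 2 * lam i / (1 + lam i * T) +
      (v - matchedVariance lam m T) * ∑ i, lam i / (1 + lam i * T) := by
  rw [sub_mul, matchedVariance_mul_sum hlam hT, tiltedMean, mul_sum, mul_sum, ← sum_sub_distrib,
    ← sum_add_distrib]
  refine sum_congr rfl fun i _ ↦ ?_
  have hl := hlam i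
  have : 0 < 1 + lam i * T := by positivity
  field_simp
  ring

lemma sum_div_one_add_mul_le (hlam : ∀ i, 0 ≤ lam i) (hT : 0 ≤ T) :
    ∑ i, lam i / (1 + lam i * T) ≤ ∑ i, lam i := by
  gcongr with i
  exact div_le_self (hlam i) (le_add_of_nonneg_right (mul_nonneg (hlam i) hT))

lemma tiltedVar_le (hlam : ∀ i, 0 ≤ lam i) (hT : 0 < T) (hv : 0 ≤ v) (hva : v ≤ a)
    (hm : ∀ i, m i ^ 2 ≤ a) : tiltedVar lam m v T ≤ 6 * a ^ 2 * (∑ i, lam i) / T := by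
  rw [mul_sum, sum_div]
  refine sum_le_sum fun i _ ↦ ?_
  have hl := hlam i
  have ha : 0 ≤ a := hv.trans hva
  have hlT : 0 ≤ lam i * T := by positivity
  have hsq : lam i ^ 2 / (1 + lam i * T) ^ 2 ≤ lam i / T := by
    rw [div_le_div_iff₀ (by positivity) hT]
    calc lam i ^ 2 * T = lam i * (lam i * T) := by ring
      _ ≤ lam i * (1 + lam i * T) ^ 2 := by gcongr; nlinarith
  have hcube : lam i ^ 2 / (1 + lam i * T) ^ 3 ≤ lam i / T := by
    refine le_trans ?_ hsq
    gcongr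
    exacts [by linarith, by norm_num]
  calc 2 * lam i ^ 2 * v ^ 2 / (1 + lam i * T) ^ 2 +
        4 * lam i ^ 2 * v * m i ^ 2 / (1 + lam i * T) ^ 3
      = 2 * v ^ 2 * (lam i ^ 2 / (1 + lam i * T) ^ 2) +
        4 * v * m i ^ 2 * (lam i ^ 2 / (1 + lam i * T) ^ 3) := by ring
    _ ≤ 2 * a ^ 2 * (lam i / T) + 4 * a * a * (lam i / T) := by gcongr; exact hm i
    _ = 6 * a ^ 2 * lam i / T := by ring

lemma half_exp_le_gaussianVec_of_matchedVariance_le {v : ℝ≥0} (hlam : ∀ i, 0 ≤ lam i)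
    (hT : 0 < T) (hv : v ≠ 0) (hva : v ≤ a) (hm : ∀ i, m i ^ 2 ≤ a)
    (hvl : matchedVariance lam m T ≤ v) (hvu : v ≤ matchedVariance lam m T + δ) (hb : 0 < b)
    (hab : 6 * a ^ 2 * (∑ i, lam i) / T ≤ b ^ 2 / 2) :
    exp (-(1 / 2) * ∑ i, log (1 + lam i * T) - 6 * a ^ 2 * (∑ i, lam i) / (v * b)) / 2 ≤
      (gaussianVec m v).real {y | ∑ i, lam i * y i ^ 2 ≤
        ∑ i, m i ^ 2 * lam i / (1 + lam i * T) + δ * (∑ i, lam i) + b} := by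
  have : (0 : ℝ) < v := by positivity
  have hvar := tiltedVar_le hlam hT v.coe_nonneg hva hm
  have hS : 0 ≤ ∑ i, lam i / (1 + lam i * T) :=
    sum_nonneg fun i _ ↦ by have := hlam i; positivity
  have hmean := tiltedMean_eq (m := m) hlam hT.le v
  have hmean_ge : 0 ≤ tiltedMean lam m v T - ∑ i, m i ^ 2 * lam i / (1 + lam i * T) := by
    rw [hmean, add_sub_cancel_left]; exact mul_nonneg (sub_nonneg.2 hvl) hS
  have hmean_le : tiltedMean lam m v T ≤
      ∑ i, m i ^ 2 * lam i / (1 + lam i * T) + δ * ∑ i, lam i := by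
    rw [hmean]
    have hexcess : v - matchedVariance lam m T ≤ δ := by linarith
    exact add_le_add_right (mul_le_mul hexcess (sum_div_one_add_mul_le hlam hT.le) hS
      ((sub_nonneg.2 hvl).trans hexcess)) _
  have hpenalty : T / v * tiltedVar lam m v T / b ≤ 6 * a ^ 2 * (∑ i, lam i) / (v * b) :=
    calc T / v * tiltedVar lam m v T / b ≤ T / v * (6 * a ^ 2 * (∑ i, lam i) / T) / b := by gcongr
      _ = _ := by field_simp
  have hgain : 0 ≤ T / (2 * v) *
      (tiltedMean lam m v T - ∑ i, m i ^ 2 * lam i / (1 + lam i * T)) := by positivity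
  calc _ ≤ _ := by gcongr exp ?_ / 2; linarith
    _ ≤ _ := half_exp_le_gaussianVec_le_tiltedMean hlam hv hT hb (hvar.trans hab)
    _ ≤ _ := measureReal_mono fun y hy ↦ hy.out.trans (by gcongr)

end MatchedVariance

section VarianceGrid

lemma exists_lt_floor_add_one_grid {σ a δ : ℝ} (hσ : 0 ≤ σ) (hσa : σ ≤ a) (hδ : 0 < δ) :
    ∃ k < ⌊a / δ⌋₊ + 1, σ ≤ (k + 1) * δ ∧ (k + 1) * δ ≤ σ + δ := by
  refine ⟨⌊σ / δ⌋₊, Nat.lt_succ_of_le (Nat.floor_le_floor (by gcongr)), ?_, ?_⟩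
  · exact (div_le_iff₀ hδ).1 (Nat.lt_floor_add_one _).le
  · have := (le_div_iff₀ hδ).1 (Nat.floor_le (div_nonneg hσ hδ.le))
    linarith

lemma exists_grid_half_exp_le_gaussianVec {ι : Type*} [Fintype ι] {lam m : ι → ℝ} {T a ρ : ℝ}
    {δ : ℝ≥0} (hlam : ∀ i, 0 ≤ lam i) (hT : 0 < T) (ha : 0 ≤ a) (hm : ∀ i, m i ^ 2 ≤ a)
    (hδ : 0 < δ) (hρ : a / δ + 1 ≤ ρ) (hbig : 12 * ρ ^ 2 ≤ (∑ i, lam i) * T) :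
    ∃ k < ⌊a / δ⌋₊ + 1, exp (-(1 / 2) * ∑ i, log (1 + lam i * T) - 6 * ρ ^ 2) / 2 ≤
      (gaussianVec m ((k + 1) * δ)).real {y | ∑ i, lam i * y i ^ 2 ≤
        ∑ i, m i ^ 2 * lam i / (1 + lam i * T) + 2 * δ * ∑ i, lam i} := by
  set L := ∑ i, lam i with hL_def
  have hδ' : (0 : ℝ) < δ := hδ
  have hρ_one : 1 ≤ ρ := le_trans (le_add_of_nonneg_left (by positivity)) hρ
  have hL : 0 < L := pos_of_mul_pos_left (lt_of_lt_of_le (by positivity) hbig) hT.le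
  obtain ⟨k, hk, hlower, hupper⟩ := exists_lt_floor_add_one_grid
    (matchedVariance_nonneg (m := m) hlam hT.le) (matchedVariance_le hlam hT.le ha hm) hδ'
  have hv : (((k + 1) * δ : ℝ≥0) : ℝ) = (k + 1) * δ := by push_cast; rfl
  have haρ : a + δ ≤ ρ * δ := by
    calc a + δ = (a / δ + 1) * δ := by field_simp
      _ ≤ ρ * δ := by gcongr
  have hvδ : (δ : ℝ) ≤ (k + 1) * δ := le_mul_of_one_le_left hδ'.le (by simp)
  refine ⟨k, hk, ?_⟩
  have key := half_exp_le_gaussianVec_of_matchedVariance_le (v := (k + 1) * δ) (a := ρ * δ)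
    (b := L * δ) hlam hT (by positivity)
    (by rw [hv]; linarith [matchedVariance_le hlam hT.le ha hm])
    (fun i ↦ (hm i).trans (by linarith)) (by rwa [hv]) (by rwa [hv]) (by positivity) (by
      rw [div_le_iff₀ hT]
      calc 6 * (ρ * δ) ^ 2 * L = 12 * ρ ^ 2 * (δ ^ 2 * L / 2) := by ring
        _ ≤ L * T * (δ ^ 2 * L / 2) := by gcongr
        _ = (L * δ) ^ 2 / 2 * T := by ring)
  rw [hv, ← hL_def] at key
  refine le_trans ?_ (key.trans_eq (by congr! 4 with y; rw [add_assoc]; congr 1; ring))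
  gcongr exp (_ - ?_) / 2
  calc 6 * (ρ * δ) ^ 2 * L / ((k + 1) * δ * (L * δ))
      ≤ 6 * (ρ * δ) ^ 2 * L / (δ * (L * δ)) := by gcongr
    _ = 6 * ρ ^ 2 := by field_simp

end VarianceGrid

section AverageMeasure

variable {κ Ω : Type*} [Fintype κ] {mΩ : MeasurableSpace Ω} {P : κ → Measure Ω}

/-- The equal-weight mixture of a finite family of measures. -/
noncomputable def averageMeasure (P : κ → Measure Ω) : Measure Ω :=
  (Fintype.card κ : ℝ≥0∞)⁻¹ • ∑ k, P k

instance [Nonempty κ] [∀ k, IsProbabilityMeasure (P k)] :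
    IsProbabilityMeasure (averageMeasure P) where
  measure_univ := by
    simp [averageMeasure, Measure.coe_finsetSum, ENNReal.inv_mul_cancel]

lemma inv_card_mul_measureReal_le_averageMeasure [∀ k, IsFiniteMeasure (P k)] (k : κ) (A : Set Ω) :
    (Fintype.card κ : ℝ)⁻¹ * (P k).real A ≤ (averageMeasure P).real A := by
  rw [averageMeasure, measureReal_ennreal_smul_apply, ENNReal.toReal_inv, ENNReal.toReal_natCast]
  gcongr
  refine ENNReal.toReal_mono (measure_ne_top _ _) ?_
  rw [Measure.coe_finsetSum, Finset.sum_apply]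
  exact single_le_sum (f := fun k ↦ P k A) (fun _ _ ↦ zero_le) (mem_univ k)

end AverageMeasure

section RandomCode

variable {E κ : Type*} [MeasurableSpace E] [Fintype κ]

lemma one_sub_exp_le_pi_exists_mem (ν : Measure E) [IsProbabilityMeasure ν] {A : Set E}
    (hA : MeasurableSet A) :
    1 - exp (-(Fintype.card κ * ν.real A)) ≤
      (Measure.pi fun _ : κ ↦ ν).real {c | ∃ i, c i ∈ A} := by
  have hcompl : {c : κ → E | ∃ i, c i ∈ A} = (Set.univ.pi fun _ ↦ Aᶜ)ᶜ := by ext; simp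
  have hmiss : (Measure.pi fun _ : κ ↦ ν).real (Set.univ.pi fun _ ↦ Aᶜ) =
      (1 - ν.real A) ^ Fintype.card κ := by
    rw [measureReal_def, Measure.pi_pi, ENNReal.toReal_prod, ← probReal_compl_eq_one_sub hA,
      prod_const, card_univ, measureReal_def]
  rw [hcompl, probReal_compl_eq_one_sub (MeasurableSet.univ_pi fun _ ↦ hA.compl), hmiss,
    ← mul_neg, exp_nat_mul]
  have : 0 ≤ 1 - ν.real A := sub_nonneg.2 measureReal_le_one
  gcongr
  exact one_sub_le_exp_neg _

lemma exists_measurable_map_restrict_Icc_eq [StandardBorelSpace E] [Nonempty E] (ν : Measure E)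
    [IsProbabilityMeasure ν] :
    ∃ φ : ℝ → E, Measurable φ ∧ (volume.restrict (Set.Icc (0 : ℝ) 1)).map φ = ν := by
  obtain ⟨φ, hφ, hmap⟩ := Measure.exists_measurable_map_eq ν
  have hφproj : Measurable fun s : ℝ ↦ φ (Set.projIcc 0 1 zero_le_one s) :=
    hφ.comp continuous_projIcc.measurable
  refine ⟨_, hφproj, ?_⟩
  rw [← unitInterval.measurePreserving_coe.map_eq, Measure.map_map hφproj measurable_subtype_coe,
    ← hmap]
  congr 1
  ext x
  simp

/- The decoder draws the codewords independently from `ν`, using `s` as randomness; the encoder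
selects the best one. -/
lemma exists_code_one_sub_exp_le [StandardBorelSpace E] [Nonempty κ] {X : Type*} {d : X → E → ℝ}
    (hd : ∀ x, Measurable (d x)) (ν : Measure E) [IsProbabilityMeasure ν] :
    ∃ (f : X → ℝ → κ) (g : κ → ℝ → E), ∀ x B,
      1 - exp (-(Fintype.card κ * ν.real {y | d x y ≤ B})) ≤
        (volume.restrict (Set.Icc (0 : ℝ) 1)).real {s | d x (g (f x s) s) ≤ B} := by
  have : Nonempty E := ν.nonempty_of_neZero
  obtain ⟨φ, hφ, hlaw⟩ := exists_measurable_map_restrict_Icc_eq (Measure.pi fun _ : κ ↦ ν)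
  choose f hf using fun x s ↦ Finite.exists_min fun k ↦ d x (φ s k)
  refine ⟨f, fun k s ↦ φ s k, fun x B ↦ ?_⟩
  have hA : MeasurableSet {y | d x y ≤ B} := measurableSet_le (hd x) measurable_const
  have hexists : MeasurableSet {c : κ → E | ∃ k, c k ∈ {y | d x y ≤ B}} := by
    rw [Set.ofPred_exists]
    exact MeasurableSet.iUnion fun k ↦ measurable_pi_apply k hA
  refine (one_sub_exp_le_pi_exists_mem ν hA).trans ?_
  rw [← hlaw, map_measureReal_apply hφ hexists]
  exact measureReal_mono fun s ⟨k, hk⟩ ↦ (hf x s k).trans hk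

end RandomCode

section RandomCodingRate

variable {n : ℕ} {lam : Fin n → ℝ} {R T : ℝ}

lemma continuousOn_Rrc (hlam : ∀ i, 0 ≤ lam i) : ContinuousOn (Rrc lam) (Set.Ici 0) := by
  unfold Rrc logb
  refine continuousOn_const.mul (continuousOn_finsetSum _ fun i _ ↦ ContinuousOn.div_const
    (ContinuousOn.log (by fun_prop) fun T hT ↦ ?_) _)
  have := mul_nonneg (hlam i) (Set.mem_Ici.1 hT)
  linarith

lemma exists_le_Rrc (hlam : ∀ i, 0 ≤ lam i) (hpos : ∃ j, 0 < lam j) (R : ℝ) :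
    ∃ T, 0 ≤ T ∧ R ≤ Rrc lam T := by
  obtain ⟨j, hj⟩ := hpos
  have hn : (0 : ℝ) < n := by exact_mod_cast j.pos
  have hT : 0 ≤ 2 ^ (2 * n * R) / lam j := by positivity
  refine ⟨2 ^ (2 * n * R) / lam j, hT, ?_⟩
  rw [Rrc, one_div, ← div_eq_inv_mul, le_div_iff₀ (by positivity)]
  calc R * (2 * n) = logb 2 (2 ^ (2 * n * R)) := by
        rw [logb_rpow (by norm_num) (by norm_num), mul_comm]
    _ ≤ logb 2 (1 + lam j * (2 ^ (2 * n * R) / lam j)) := by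
        rw [mul_div_cancel₀ _ hj.ne']
        gcongr
        exacts [by norm_num, by linarith]
    _ ≤ ∑ i, logb 2 (1 + lam i * (2 ^ (2 * n * R) / lam j)) :=
        single_le_sum (f := fun i ↦ logb 2 (1 + lam i * (2 ^ (2 * n * R) / lam j)))
          (fun i _ ↦ logb_nonneg (by norm_num) (by have := mul_nonneg (hlam i) hT; linarith))
          (mem_univ j)

lemma Trc_spec (hlam : ∀ i, 0 ≤ lam i) (hpos : ∃ j, 0 < lam j) (hR : 0 < R) :
    0 < Trc lam R ∧ Rrc lam (Trc lam R) = R := by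
  refine Classical.epsilon_spec (p := fun T ↦ 0 < T ∧ Rrc lam T = R) ?_
  obtain ⟨b, hb, hRb⟩ := exists_le_Rrc hlam hpos R
  have hzero : Rrc lam 0 = 0 := by simp [Rrc]
  obtain ⟨T, hT, hTR⟩ := intermediate_value_Icc hb
    ((continuousOn_Rrc hlam).mono Set.Icc_subset_Ici_self) ⟨hzero.trans_le hR.le, hRb⟩
  exact ⟨T, hT.1.lt_of_ne fun h ↦ hR.ne (by rw [← hzero, h, hTR]), hTR⟩

lemma sum_log_eq_mul_Rrc (hn : n ≠ 0) (lam : Fin n → ℝ) (T : ℝ) :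
    ∑ i, log (1 + lam i * T) = 2 * n * Rrc lam T * log 2 := by
  have : log 2 ≠ 0 := by positivity
  simp only [Rrc, logb, ← sum_div]
  generalize ∑ i, log (1 + lam i * T) = S
  field_simp

lemma sum_log_one_add_mul_le (hlam : ∀ i, 0 ≤ lam i) (hT : 0 ≤ T) :
    ∑ i, log (1 + lam i * T) ≤ (∑ i, lam i) * T := by
  rw [sum_mul]
  gcongr with i
  have hl := hlam i
  linarith [log_le_sub_one_of_pos (show 0 < 1 + lam i * T by positivity)]

lemma DrcV_nonneg (hlam : ∀ i, 0 ≤ lam i) (V : Fin n → ℝ) (hT : 0 ≤ T) : 0 ≤ DrcV lam V T :=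
  mul_nonneg (by positivity) (sum_nonneg fun i _ ↦ by have := hlam i; positivity)

end RandomCodingRate

section Distortion

variable {n : ℕ} {Sig U : Matrix (Fin n) (Fin n) ℝ} {lam : Fin n → ℝ}

lemma measurable_dSig (Sig : Matrix (Fin n) (Fin n) ℝ) (W : Fin n → ℝ) :
    Measurable (dSig Sig W) := by
  unfold dSig
  simp only [dotProduct, mulVec]
  fun_prop

lemma dSig_mul_diagonal_mul_transpose (U : Matrix (Fin n) (Fin n) ℝ) (lam W x : Fin n → ℝ) :
    dSig (U * diagonal lam * Uᵀ) W x = ∑ i, lam i * (Uᵀ *ᵥ (W - x)) i ^ 2 := by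
  rw [dSig, ← mulVec_mulVec, ← mulVec_mulVec, dotProduct_mulVec, ← mulVec_transpose]
  simp only [dotProduct, mulVec_diagonal]
  exact sum_congr rfl fun i _ ↦ by ring

/-- The spectral decomposition `Sig = U diag(lam) Uᵀ` of a positive semidefinite matrix of
trace `n`. -/
structure IsNormalizedSpectral (Sig U : Matrix (Fin n) (Fin n) ℝ) (lam : Fin n → ℝ) : Prop where
  orthogonal : U * Uᵀ = 1
  eq_conj : Sig = U * diagonal lam * Uᵀ
  nonneg : ∀ i, 0 ≤ lam i
  sum_eq : ∑ i, lam i = n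

namespace IsNormalizedSpectral

lemma exists_pos (h : IsNormalizedSpectral Sig U lam) (hn : n ≠ 0) : ∃ j, 0 < lam j := by
  obtain ⟨j, -, hj⟩ := exists_lt_of_sum_lt (s := univ) (f := 0) (g := lam) (by
    simpa [h.sum_eq] using hn.bot_lt)
  exact ⟨j, hj⟩

lemma DDrcV_nonneg (h : IsNormalizedSpectral Sig U lam) (hn : n ≠ 0) {R : ℝ} (hR : 0 < R)
    (V : Fin n → ℝ) : 0 ≤ DDrcV lam V R :=
  DrcV_nonneg h.nonneg V (Trc_spec h.nonneg (h.exists_pos hn) hR).1.le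

lemma le_Trc (h : IsNormalizedSpectral Sig U lam) (hn : n ≠ 0) {R : ℝ} (hR : 0 < R) :
    2 * R * log 2 ≤ Trc lam R := by
  obtain ⟨hT, hrate⟩ := Trc_spec h.nonneg (h.exists_pos hn) hR
  have hle := sum_log_one_add_mul_le h.nonneg hT.le
  rw [sum_log_eq_mul_Rrc hn, hrate, h.sum_eq] at hle
  have : (0 : ℝ) < n := by positivity
  exact le_of_mul_le_mul_left (by linarith) this

lemma gaussianVec_dSig_le (h : IsNormalizedSpectral Sig U lam) (W : Fin n → ℝ) (v : ℝ≥0) (B : ℝ) :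
    (gaussianVec 0 v).real {x | dSig Sig W x ≤ B} =
      (gaussianVec (Uᵀ *ᵥ W) v).real {y | ∑ i, lam i * y i ^ 2 ≤ B} := by
  rw [← map_transpose_mulVec_sub_gaussianVec_zero h.orthogonal, map_measureReal_apply
    (by fun_prop) (measurableSet_le (by fun_prop) measurable_const)]
  simp only [h.eq_conj, dSig_mul_diagonal_mul_transpose, Set.preimage_ofPred_eq]

end IsNormalizedSpectral

end Distortion

section Code

variable {n : ℕ} {Sig U : Matrix (Fin n) (Fin n) ℝ} {lam W : Fin n → ℝ}
  {κ : Type*} {R r ρ τ p : ℝ} {δ : ℝ≥0}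

/-- The law of a random codeword: centred normal with a variance drawn uniformly from the grid
`δ, 2 * δ, …`, fine enough to approximate every matched variance in `[0, a]`. -/
noncomputable abbrev codewordLaw (ι : Type*) [Fintype ι] (a : ℝ) (δ : ℝ≥0) : Measure (ι → ℝ) :=
  averageMeasure fun k : Fin (⌊a / δ⌋₊ + 1) ↦ gaussianVec 0 (((k : ℕ) + 1) * δ)

/-- The code with encoder `f` and decoder `g`, whose common randomness is uniform on `[0, 1]`,
reproduces every `W` with `‖Uᵀ W‖_∞ ≤ r` to within `τ` of the random-coding distortion at rate `R`,
with probability at least `p`. -/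
def SucceedsWithProb (f : (Fin n → ℝ) → Matrix (Fin n) (Fin n) ℝ → ℝ → κ)
    (g : κ → ℝ → Fin n → ℝ) (R r τ p : ℝ) : Prop :=
  ∀ W Sig U lam, IsNormalizedSpectral Sig U lam → ‖Uᵀ *ᵥ W‖ ≤ r →
    p ≤ (volume.restrict (Set.Icc (0 : ℝ) 1)).real
      {s | (1 / n) * dSig Sig W (g (f W Sig s) s) ≤ DDrcV lam (Uᵀ *ᵥ W) R + τ}

lemma SucceedsWithProb.mono {f : (Fin n → ℝ) → Matrix (Fin n) (Fin n) ℝ → ℝ → κ}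
    {g : κ → ℝ → Fin n → ℝ} {q : ℝ} (h : SucceedsWithProb f g R r τ p) (hqp : q ≤ p) :
    SucceedsWithProb f g R r τ q :=
  fun W Sig U lam hspec hW ↦ hqp.trans (h W Sig U lam hspec hW)

lemma sq_le_sq_of_norm_le {ι : Type*} [Fintype ι] {V : ι → ℝ} (hV : ‖V‖ ≤ r) (i : ι) :
    V i ^ 2 ≤ r ^ 2 :=
  sq_le_sq.2 (((norm_le_pi_norm V i).trans hV).trans (le_abs_self r))

lemma half_exp_le_codewordLaw_dSig_le (h : IsNormalizedSpectral Sig U lam) (hn : n ≠ 0)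
    (hR : 0 < R) (hδ : 0 < δ) (hW : ‖Uᵀ *ᵥ W‖ ≤ r) (hρ : r ^ 2 / δ + 1 ≤ ρ)
    (hbig : 12 * ρ ^ 2 ≤ n * (2 * R * log 2)) :
    ((⌊r ^ 2 / δ⌋₊ : ℝ) + 1)⁻¹ * (exp (-(n * R * log 2) - 6 * ρ ^ 2) / 2) ≤
      (codewordLaw (Fin n) (r ^ 2) δ).real
        {x | (1 / n) * dSig Sig W x ≤ DDrcV lam (Uᵀ *ᵥ W) R + 2 * δ} := by
  obtain ⟨hT, hrate⟩ := Trc_spec h.nonneg (h.exists_pos hn) hR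
  have hn_pos : (0 : ℝ) < n := by positivity
  obtain ⟨k, hk, hball⟩ := exists_grid_half_exp_le_gaussianVec h.nonneg hT (sq_nonneg r)
    (sq_le_sq_of_norm_le hW) hδ hρ (by
      rw [h.sum_eq]
      exact hbig.trans (by gcongr; exact h.le_Trc hn hR))
  have hexponent : -(1 / 2) * ∑ i, log (1 + lam i * Trc lam R) = -(n * R * log 2) := by
    rw [sum_log_eq_mul_Rrc hn, hrate]; ring
  have hset : {x | (1 / n) * dSig Sig W x ≤ DDrcV lam (Uᵀ *ᵥ W) R + 2 * δ} =
      {x | dSig Sig W x ≤ ∑ i, (Uᵀ *ᵥ W) i ^ 2 * lam i / (1 + lam i * Trc lam R) +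
        2 * δ * ∑ i, lam i} := by
    have hscale (x y : ℝ) : (1 / n) * x ≤ (1 / n) * y + 2 * δ ↔ x ≤ y + 2 * δ * n := by
      rw [← mul_le_mul_iff_right₀ hn_pos]
      field_simp
    simp only [DDrcV, DrcV, h.sum_eq, hscale]
  rw [hexponent, ← h.gaussianVec_dSig_le, ← hset] at hball
  refine le_trans ?_ (inv_card_mul_measureReal_le_averageMeasure ⟨k, hk⟩ _)
  rw [Fintype.card_fin, Nat.cast_add_one]
  gcongr

lemma nonempty_fin_floor_two_rpow {x : ℝ} (hx : 0 ≤ x) : Nonempty (Fin ⌊(2 : ℝ) ^ x⌋₊) :=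
  Fin.pos_iff_nonempty.1 (Nat.floor_pos.2 (one_le_rpow one_le_two hx))

lemma four_mul_le_exp (x : ℝ) : 4 * x ≤ exp (4 * x ^ 2) := by
  nlinarith [add_one_le_exp (4 * x ^ 2), sq_nonneg (2 * x - 1)]

lemma rpow_mul_exp_le_mul_codewordLaw_dSig_le {ε : ℝ} (h : IsNormalizedSpectral Sig U lam)
    (hn : n ≠ 0) (hR : 0 < R) (hε : 0 ≤ ε) (hδ : 0 < δ) (hW : ‖Uᵀ *ᵥ W‖ ≤ r)
    (hρ : r ^ 2 / δ + 1 ≤ ρ) (hbig : 12 * ρ ^ 2 ≤ n * (2 * R * log 2)) :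
    2 ^ (n * ε) * exp (-(10 * ρ ^ 2)) ≤
      ⌊(2 : ℝ) ^ (n * (R + ε))⌋₊ * (codewordLaw (Fin n) (r ^ 2) δ).real
        {x | (1 / n) * dSig Sig W x ≤ DDrcV lam (Uᵀ *ᵥ W) R + 2 * δ} := by
  set K : ℝ := ⌊r ^ 2 / δ⌋₊ + 1
  have hK_pos : 0 < K := by positivity
  have hKρ : K ≤ ρ := by
    linarith [Nat.floor_le (show 0 ≤ r ^ 2 / δ by positivity)]
  have hfloor : (2 : ℝ) ^ (n * (R + ε)) / 2 ≤ ⌊(2 : ℝ) ^ (n * (R + ε))⌋₊ :=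
    (Nat.div_two_lt_floor (one_le_rpow one_le_two (by positivity))).le
  have hpow : (2 : ℝ) ^ (n * (R + ε)) = exp (n * R * log 2) * 2 ^ (n * ε) := by
    rw [mul_add, rpow_add two_pos, rpow_def_of_pos two_pos (n * R), mul_comm (log 2)]
  calc (2 : ℝ) ^ (n * ε) * exp (-(10 * ρ ^ 2))
      = 2 ^ (n * ε) * exp (-(6 * ρ ^ 2)) * (exp (4 * ρ ^ 2))⁻¹ := by
        rw [← exp_neg, mul_assoc, ← exp_add]; ring_nf
    _ ≤ 2 ^ (n * ε) * exp (-(6 * ρ ^ 2)) * (4 * K)⁻¹ := by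
        gcongr
        exact le_trans (by gcongr) (four_mul_le_exp ρ)
    _ = 2 ^ (n * (R + ε)) / 2 * (K⁻¹ * (exp (-(n * R * log 2) - 6 * ρ ^ 2) / 2)) := by
        rw [hpow, sub_eq_add_neg, exp_add, exp_neg (n * R * log 2)]
        field_simp
        norm_num
    _ ≤ _ := by
        gcongr
        exact half_exp_le_codewordLaw_dSig_le h hn hR hδ hW hρ hbig

lemma exists_code_succeedsWithProb {ε : ℝ} (hn : n ≠ 0) (hR : 0 < R) (hε : 0 ≤ ε) (hδ : 0 < δ)
    (hρ : r ^ 2 / δ + 1 ≤ ρ) (hbig : 12 * ρ ^ 2 ≤ n * (2 * R * log 2)) :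
    ∃ (f : (Fin n → ℝ) → Matrix (Fin n) (Fin n) ℝ → ℝ → Fin ⌊(2 : ℝ) ^ (n * (R + ε))⌋₊)
      (g : Fin ⌊(2 : ℝ) ^ (n * (R + ε))⌋₊ → ℝ → Fin n → ℝ),
      SucceedsWithProb f g R r (2 * δ) (1 - exp (-(2 ^ (n * ε) * exp (-(10 * ρ ^ 2))))) := by
  have := nonempty_fin_floor_two_rpow (show 0 ≤ n * (R + ε) by positivity)
  obtain ⟨f, g, hcode⟩ := exists_code_one_sub_exp_le (κ := Fin ⌊(2 : ℝ) ^ (n * (R + ε))⌋₊)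
    (d := fun (WS : (Fin n → ℝ) × Matrix (Fin n) (Fin n) ℝ) x ↦ (1 / n) * dSig WS.2 WS.1 x)
    (fun WS ↦ (measurable_dSig WS.2 WS.1).const_mul _) (codewordLaw (Fin n) (r ^ 2) δ)
  refine ⟨fun W Sig ↦ f (W, Sig), g, fun W Sig U lam h hW ↦ le_trans ?_ (hcode (W, Sig) _)⟩
  rw [Fintype.card_fin]
  gcongr 1 - exp (-?_)
  exact rpow_mul_exp_le_mul_codewordLaw_dSig_le h hn hR hε hδ hW hρ hbig

lemma exists_code_succeedsWithProb_one [Nonempty κ] (hn : n ≠ 0) (hR : 0 < R) (hr : r ^ 2 ≤ τ) :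
    ∃ (f : (Fin n → ℝ) → Matrix (Fin n) (Fin n) ℝ → ℝ → κ) (g : κ → ℝ → Fin n → ℝ),
      SucceedsWithProb f g R r τ 1 := by
  refine ⟨fun _ _ _ ↦ Classical.arbitrary κ, fun _ _ ↦ 0, fun W Sig U lam h hW ↦ ?_⟩
  have hdist : (1 / n) * dSig Sig W 0 ≤ r ^ 2 := by
    rw [h.eq_conj, dSig_mul_diagonal_mul_transpose, sub_zero, one_div,
      inv_mul_le_iff₀ (by positivity), ← h.sum_eq, sum_mul]
    exact sum_le_sum fun i _ ↦ mul_le_mul_of_nonneg_left (sq_le_sq_of_norm_le hW i) (h.nonneg i)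
  have hle : (1 / n) * dSig Sig W 0 ≤ DDrcV lam (Uᵀ *ᵥ W) R + τ := by
    linarith [h.DDrcV_nonneg hn hR (Uᵀ *ᵥ W)]
  simp only [hle, Set.ofPred_true]
  simp

end Code

section Asymptotics

lemma eventually_mul_rpow_le {p q : ℝ} (hpq : p < q) (C : ℝ) {D : ℝ} (hD : 0 < D) :
    ∀ᶠ n : ℕ in atTop, C * (n : ℝ) ^ p ≤ D * (n : ℝ) ^ q := by
  have hlim : Tendsto (fun n : ℕ ↦ D * (n : ℝ) ^ (q - p)) atTop atTop :=
    ((tendsto_rpow_atTop (sub_pos.2 hpq)).comp tendsto_natCast_atTop_atTop).const_mul_atTop hD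
  filter_upwards [hlim.eventually_ge_atTop C, eventually_gt_atTop 0] with n hC hn
  have hn_pos : (0 : ℝ) < n := by positivity
  calc C * (n : ℝ) ^ p ≤ D * (n : ℝ) ^ (q - p) * (n : ℝ) ^ p := by gcongr
    _ = D * (n : ℝ) ^ q := by rw [mul_assoc, ← rpow_add hn_pos, sub_add_cancel]

variable {R ε η α β : ℝ}

lemma eventually_exists_code_of_lt (hR : 0 < R) (hε : 0 < ε) (hη : 0 < η) (hαβ : α < β) :
    ∀ᶠ n : ℕ in atTop,
      ∃ (f : (Fin n → ℝ) → Matrix (Fin n) (Fin n) ℝ → ℝ → Fin ⌊(2 : ℝ) ^ (n * (R + ε))⌋₊)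
        (g : Fin ⌊(2 : ℝ) ^ (n * (R + ε))⌋₊ → ℝ → Fin n → ℝ),
        SucceedsWithProb f g R ((n : ℝ) ^ α) ((n : ℝ) ^ (2 * β) * η) 1 := by
  filter_upwards [eventually_mul_rpow_le (show 2 * α < 2 * β by linarith) 1 hη,
    eventually_ne_atTop 0] with n hslack hn
  have := nonempty_fin_floor_two_rpow (show 0 ≤ n * (R + ε) by positivity)
  refine exists_code_succeedsWithProb_one hn hR ?_
  calc ((n : ℝ) ^ α) ^ 2 = 1 * (n : ℝ) ^ (2 * α) := by
        rw [one_mul, mul_comm, rpow_mul n.cast_nonneg, rpow_two]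
    _ ≤ η * (n : ℝ) ^ (2 * β) := hslack
    _ = (n : ℝ) ^ (2 * β) * η := mul_comm _ _

lemma eventually_exists_code_of_le (hR : 0 < R) (hε : 0 ≤ ε) (hη : 0 < η) (hβα : β ≤ α)
    (hαβ : α - 1 / 4 < β) :
    ∀ᶠ n : ℕ in atTop,
      ∃ (f : (Fin n → ℝ) → Matrix (Fin n) (Fin n) ℝ → ℝ → Fin ⌊(2 : ℝ) ^ (n * (R + ε))⌋₊)
        (g : Fin ⌊(2 : ℝ) ^ (n * (R + ε))⌋₊ → ℝ → Fin n → ℝ),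
        SucceedsWithProb f g R ((n : ℝ) ^ α) ((n : ℝ) ^ (2 * β) * η)
          (1 - exp (-(2 ^ (n * ε) * exp (-(10 * (2 / η + 1) ^ 2 * (n : ℝ) ^ (4 * (α - β))))))) := by
  filter_upwards [eventually_mul_rpow_le (show 4 * (α - β) < 1 by linarith)
    (12 * (2 / η + 1) ^ 2) (show 0 < 2 * R * log 2 by positivity), eventually_gt_atTop 0]
    with n hbig hn
  have hn_one : (1 : ℝ) ≤ n := by exact_mod_cast hn
  have hn_pos : (0 : ℝ) < n := by linarith
  obtain ⟨δ, hδ⟩ : ∃ δ : ℝ≥0, (δ : ℝ) = (n : ℝ) ^ (2 * β) * η / 2 := ⟨⟨_, by positivity⟩, rfl⟩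
  have hδ_pos : 0 < δ := by rw [← NNReal.coe_pos, hδ]; positivity
  set ρ := (2 / η + 1) * (n : ℝ) ^ (2 * (α - β)) with hρ_def
  have hρ_sq : ρ ^ 2 = (2 / η + 1) ^ 2 * (n : ℝ) ^ (4 * (α - β)) := by
    rw [mul_pow, ← rpow_mul_natCast hn_pos.le]; push_cast; ring_nf
  have hratio : ((n : ℝ) ^ α) ^ 2 / δ = 2 / η * (n : ℝ) ^ (2 * (α - β)) := by
    rw [hδ, ← rpow_mul_natCast hn_pos.le, mul_sub, rpow_sub hn_pos, Nat.cast_two, mul_comm α]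
    field_simp
  have hρ : ((n : ℝ) ^ α) ^ 2 / δ + 1 ≤ ρ := by
    rw [hratio, hρ_def, add_one_mul]
    gcongr
    exact one_le_rpow hn_one (by linarith)
  have key := exists_code_succeedsWithProb hn.ne' hR hε hδ_pos hρ (by
    rw [hρ_sq, ← mul_assoc, mul_comm (n : ℝ)]
    rwa [rpow_one] at hbig)
  rwa [hδ, mul_div_cancel₀ _ two_ne_zero, hρ_sq, ← mul_assoc] at key

lemma rpow_mul_one_sub_eq {n : ℕ} (hn : n ≠ 0) (hε : ε ≠ 0) (a q : ℝ) :
    (2 : ℝ) ^ (n * ε * (1 - a / (ε * log 2) * (n : ℝ) ^ (q - 1))) =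
      2 ^ (n * ε) * exp (-(a * (n : ℝ) ^ q)) := by
  have hn_pos : (0 : ℝ) < n := by positivity
  have : log 2 ≠ 0 := by positivity
  rw [rpow_def_of_pos two_pos, rpow_def_of_pos two_pos, ← exp_add, rpow_sub_one hn_pos.ne']
  congr 1
  field_simp
  ring

lemma eventually_exists_code (hR : 0 < R) (hε : 0 < ε) (hη : 0 < η) (hαβ : α - 1 / 4 < β) :
    ∃ c > 0, ∀ᶠ n : ℕ in atTop,
      ∃ (f : (Fin n → ℝ) → Matrix (Fin n) (Fin n) ℝ → ℝ → Fin ⌊(2 : ℝ) ^ (n * (R + ε))⌋₊)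
        (g : Fin ⌊(2 : ℝ) ^ (n * (R + ε))⌋₊ → ℝ → Fin n → ℝ),
        SucceedsWithProb f g R ((n : ℝ) ^ α) ((n : ℝ) ^ (2 * β) * η)
          (1 - exp (-2 ^ (n * ε * (1 - c * (n : ℝ) ^ (4 * (α - β) - 1))))) := by
  rcases lt_or_ge α β with hlt | hge
  · refine ⟨1, one_pos, ?_⟩
    filter_upwards [eventually_exists_code_of_lt hR hε hη hlt] with n ⟨f, g, hfg⟩
    exact ⟨f, g, hfg.mono (sub_le_self _ (exp_nonneg _))⟩
  · refine ⟨10 * (2 / η + 1) ^ 2 / (ε * log 2), by positivity, ?_⟩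
    filter_upwards [eventually_exists_code_of_le hR hε.le hη hge hαβ, eventually_ne_atTop 0]
      with n hcode hn
    simpa only [rpow_mul_one_sub_eq hn hε.ne'] using hcode

end Asymptotics

end RandomCoding

theorem stmt_4_general (Rstar ε η α β : ℝ) (hRstar : 0 < Rstar) (hε : 0 < ε) (hη : 0 < η)
    (hαβ : α - 1 / 4 < β) :
    ∃ (n₀ : ℕ) (c : ℝ), 0 < c ∧ ∀ n : ℕ, n₀ ≤ n →
      ∃ (R : ℝ) (f : (Fin n → ℝ) → Matrix (Fin n) (Fin n) ℝ → ℝ →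
            Fin ⌊(2 : ℝ) ^ ((n : ℝ) * R)⌋₊)
        (g : Fin ⌊(2 : ℝ) ^ ((n : ℝ) * R)⌋₊ → ℝ → (Fin n → ℝ)),
        R ≤ Rstar + ε ∧
        ∀ (W : Fin n → ℝ) (Sig U : Matrix (Fin n) (Fin n) ℝ) (lam : Fin n → ℝ),
          U * Uᵀ = 1 → Sig = U * Matrix.diagonal lam * Uᵀ →
          (∀ i, 0 ≤ lam i) → (∑ i, lam i) = (n : ℝ) →
          ‖Uᵀ.mulVec W‖ ≤ (n : ℝ) ^ α →
          1 - Real.exp (-(2 : ℝ) ^ ((n : ℝ) * ε * (1 - c * (n : ℝ) ^ (4 * (α - β) - 1)))) ≤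
            ((volume.restrict (Set.Icc (0 : ℝ) 1))
              {s : ℝ |
                (1 / (n : ℝ)) * dSig Sig W (g (f W Sig s) s)
                  ≤ DDrcV lam (Uᵀ.mulVec W) Rstar + (n : ℝ) ^ (2 * β) * η}).toReal := by
  obtain ⟨c, hc, hcode⟩ := RandomCoding.eventually_exists_code hRstar hε hη hαβ
  obtain ⟨n₀, hn₀⟩ := Filter.eventually_atTop.1 hcode
  refine ⟨n₀, c, hc, fun n hn ↦ ?_⟩
  obtain ⟨f, g, hfg⟩ := hn₀ n hn
  exact ⟨Rstar + ε, f, g, le_rfl, fun W Sig U lam hU hSig hlam hsum hW ↦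
    hfg W Sig U lam ⟨hU, hSig, hlam, hsum⟩ hW⟩

/-- achievability of the random-coding rate-distortion for a fixed
(non-random) admissible `W`. The sup norm `‖·‖` on `Fin n → ℝ` is `‖·‖∞`. -/
theorem stmt_4 (Rstar ε η α β : ℝ) (hRstar : 0 < Rstar) (hε : 0 < ε) (hη : 0 < η)
    (hα : 0 < α) (hβ : (α < 1 / 4 ∧ β = 0) ∨ (1 / 4 ≤ α ∧ α - 1 / 4 < β)) :
    ∃ (n₀ : ℕ) (c : ℝ), 0 < c ∧ ∀ n : ℕ, n₀ ≤ n →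
      ∃ (R : ℝ) (f : (Fin n → ℝ) → Matrix (Fin n) (Fin n) ℝ → ℝ →
            Fin ⌊(2 : ℝ) ^ ((n : ℝ) * R)⌋₊)
        (g : Fin ⌊(2 : ℝ) ^ ((n : ℝ) * R)⌋₊ → ℝ → (Fin n → ℝ)),
        R ≤ Rstar + ε ∧
        ∀ (W : Fin n → ℝ) (Sig U : Matrix (Fin n) (Fin n) ℝ) (lam : Fin n → ℝ),
          U * Uᵀ = 1 → Sig = U * Matrix.diagonal lam * Uᵀ →
          (∀ i, 0 ≤ lam i) → (∑ i, lam i) = (n : ℝ) →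
          ‖Uᵀ.mulVec W‖ ≤ (n : ℝ) ^ α →
          1 - Real.exp (-(2 : ℝ) ^ ((n : ℝ) * ε * (1 - c * (n : ℝ) ^ (4 * (α - β) - 1)))) ≤
            ((volume.restrict (Set.Icc (0 : ℝ) 1))
              {s : ℝ |
                (1 / (n : ℝ)) * dSig Sig W (g (f W Sig s) s)
                  ≤ DDrcV lam (Uᵀ.mulVec W) Rstar + (n : ℝ) ^ (2 * β) * η}).toReal := by
  exact stmt_4_general Rstar ε η α β hRstar hε hη (by rcases hβ with ⟨h, rfl⟩ | ⟨_, h⟩ <;> linarith)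
end

section
/- Fix constants R*, ε, η > 0 and α ∈ (0, 1/4). Let (W, Σ) be admissible with parameter α (Σ = UΛUᵀ, λ the diagonal of Λ), let τ = τ(W, Σ), and let C = {c₁,…,c_M} with M = ⌊2^{n(R*+ε)}⌋ and c₁,…,c_M i.i.d. N(0, Iₙ). Then there is a constant c = c(ε, η, R*, α) such that for all sufficiently large n: Pr_C[ (1/n) min_{i∈[M]} d_Σ(W, τ cᵢ) ≤ 𝐃_rc^λ(UᵀW, R*) + η ] ≥ 1 − exp(−2^{nε(1 − c n^{4α−1})}). -/
open MeasureTheory Matrix Real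

/-- Standard Gaussian measure `N(0, I_n)` on `ℝⁿ`. -/
noncomputable def stdGaussian (n : ℕ) : Measure (Fin n → ℝ) :=
  Measure.pi fun _ => ProbabilityTheory.gaussianReal 0 1

/-- Law of a codebook of `M` i.i.d. `N(0, I_n)` codewords. -/
noncomputable def codebookMeasure (n M : ℕ) : Measure (Fin M → (Fin n → ℝ)) :=
  Measure.pi fun _ => stdGaussian n

/-- Scaling parameter `τ(W,Σ)`, as a function of `λ`, `W̃ = UᵀW` and `T`:
`τ = (T Σⱼ W̃ⱼ² λⱼ²/(1+λⱼT)²)^{1/2} (Σⱼ λⱼ/(1+λⱼT))^{-1/2}`. -/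
noncomputable def tauDef {n : ℕ} (lam Wt : Fin n → ℝ) (T : ℝ) : ℝ :=
  Real.sqrt (T * ∑ j, (Wt j) ^ 2 * (lam j) ^ 2 / (1 + lam j * T) ^ 2) /
    Real.sqrt (∑ j, lam j / (1 + lam j * T))

/-!
One codeword succeeds with probability about `2 ^ (-n R)`, by a Chernoff bound run in reverse.
In the eigenbasis of `Σ` the distortion of `τ c` is `X = ∑ λᵢ (W̃ᵢ - τ gᵢ)²` with `g` standard
Gaussian. Tilt its law by `exp (t X)` with `t = -T / (2 τ²)`: the formula for `τ` makes the tilted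
mean equal to `n D_rc`, and `cgf X t - t n D_rc = -(∑ log (1 + λᵢ T)) / 2 = -n R log 2`. Undoing the
tilt costs only `exp (O (V / e))`, where `V` is the tilted variance and `e = n η`, provided
`2 V ≤ e²`: for a centered `Y`, the convexity bound `exp (s Y) ≥ exp (-a) (1 + a + s Y)` with
`a = 2 s V / e`, lowered by a multiple of `Y²` so as to be negative for `Y > e`, can be integrated
over the whole space. As `T ≥ 2 R log 2` and `τ ≤ ‖W̃‖∞ ≤ n ^ α`, we have `V = O (n ^ (1 + 4 α))`,
which is `o (e²)` because `α < 1 / 4`.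
-/

section ReverseChernoff

open ProbabilityTheory (cgf integrableExpSet)
open scoped ProbabilityTheory

variable {Ω : Type*} {mΩ : MeasurableSpace Ω} {μ : Measure Ω} [IsProbabilityMeasure μ] {X : Ω → ℝ}
  {s t e : ℝ}

lemma exp_neg_mul_quadratic_le_indicator_Iic_exp {a : ℝ} (ha : 0 ≤ a) (hs : 0 ≤ s) (he : 0 < e)
    (x : ℝ) :
    exp (-a) * (1 + a + s * x - ((1 + a) / e ^ 2 + s / e) * x ^ 2) ≤
      (Set.Iic e).indicator (fun y => exp (s * y)) x := by
  by_cases hx : x ≤ e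
  · rw [Set.indicator_of_mem (Set.mem_Iic.2 hx)]
    have hquad : 0 ≤ ((1 + a) / e ^ 2 + s / e) * x ^ 2 := by positivity
    have htangent : 1 + a + s * x ≤ exp (a + s * x) := by linarith [add_one_le_exp (a + s * x)]
    calc exp (-a) * (1 + a + s * x - ((1 + a) / e ^ 2 + s / e) * x ^ 2)
        ≤ exp (-a) * exp (a + s * x) := by gcongr; linarith
      _ = exp (s * x) := by rw [← exp_add]; ring_nf
  · rw [Set.indicator_of_notMem (by simpa using hx)]
    have hratio : 1 ≤ x / e := (one_le_div he).2 (not_le.1 hx).le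
    have hx0 : 0 ≤ x := (he.trans (not_le.1 hx)).le
    have hlinear : s * x ≤ s * x * (x / e) := le_mul_of_one_le_right (by positivity) hratio
    have hconst : 1 + a ≤ (1 + a) * (x / e) ^ 2 :=
      le_mul_of_one_le_right (by positivity) (one_le_pow₀ hratio)
    have hsplit : ((1 + a) / e ^ 2 + s / e) * x ^ 2 = (1 + a) * (x / e) ^ 2 + s * x * (x / e) := by
      field_simp
    exact mul_nonpos_of_nonneg_of_nonpos (exp_pos _).le (by linarith)

lemma half_exp_le_setIntegral_exp_of_integral_eq_zero (hX : MemLp X 2 μ) (hXm : Measurable X)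
    (hmean : μ[X] = 0) (hs : 0 ≤ s) (he : 0 < e) (hsq : 2 * μ[X ^ 2] ≤ e ^ 2) :
    exp (-(2 * s * μ[X ^ 2] / e)) / 2 ≤ ∫ ω in {ω | X ω ≤ e}, exp (s * X ω) ∂μ := by
  set v := μ[X ^ 2]
  have hv : 0 ≤ v := integral_nonneg fun ω => sq_nonneg (X ω)
  set a := 2 * s * v / e
  have ha : 0 ≤ a := by positivity
  set b := (1 + a) / e ^ 2 + s / e
  have hmeas : MeasurableSet {ω | X ω ≤ e} := measurableSet_le hXm measurable_const
  have hlin : Integrable (fun ω => 1 + a + s * X ω) μ :=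
    (integrable_const _).add ((hX.integrable one_le_two).const_mul s)
  have hquad : Integrable (fun ω => b * X ω ^ 2) μ := hX.integrable_sq.const_mul b
  have hexp : IntegrableOn (fun ω => exp (s * X ω)) {ω | X ω ≤ e} μ :=
    Measure.integrableOn_of_bounded (M := exp (s * e)) (measure_ne_top _ _) (by fun_prop) <|
      (ae_restrict_iff' hmeas).2 <| .of_forall fun ω (hω : X ω ≤ e) => by
        rw [norm_eq_abs, abs_exp]; gcongr
  have hve : v / e ^ 2 ≤ 1 / 2 := by
    rw [div_le_div_iff₀ (by positivity) two_pos]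
    linarith
  have hbv : b * v ≤ (1 + a) / 2 + a / 2 :=
    calc b * v = (1 + a) * (v / e ^ 2) + a / 2 := by simp only [a, b]; field_simp
      _ ≤ (1 + a) * (1 / 2) + a / 2 := by gcongr
      _ = (1 + a) / 2 + a / 2 := by ring
  calc exp (-a) / 2 = exp (-a) * (1 / 2) := by ring
    _ ≤ exp (-a) * (1 + a - b * v) := by gcongr; linarith
    _ = ∫ ω, exp (-a) * (1 + a + s * X ω - b * X ω ^ 2) ∂μ := by
        rw [integral_const_mul, integral_sub hlin hquad,
          integral_add (integrable_const _) ((hX.integrable one_le_two).const_mul s),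
          integral_const_mul, integral_const_mul, hmean]
        simp [v]
    _ ≤ ∫ ω, {ω | X ω ≤ e}.indicator (fun ω => exp (s * X ω)) ω ∂μ :=
        integral_mono ((hlin.sub hquad).const_mul _) (hexp.integrable_indicator hmeas)
          fun ω => exp_neg_mul_quadratic_le_indicator_Iic_exp ha hs he (X ω)
    _ = ∫ ω in {ω | X ω ≤ e}, exp (s * X ω) ∂μ := integral_indicator hmeas

/-- Under the tilted law `μ.tilted (t * X)` the variable `X` has mean `deriv (cgf X μ) t` and
variance `iteratedDeriv 2 (cgf X μ) t`. -/
lemma half_exp_cgf_le_measureReal_le (hX : Measurable X)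
    (ht : t ∈ interior (integrableExpSet X μ)) (ht0 : t ≤ 0) (he : 0 < e)
    (hvar : 2 * iteratedDeriv 2 (cgf X μ) t ≤ e ^ 2) :
    exp (cgf X μ t - t * deriv (cgf X μ) t + 2 * t * iteratedDeriv 2 (cgf X μ) t / e) / 2 ≤
      μ.real {ω | X ω ≤ deriv (cgf X μ) t + e} := by
  have hexp : Integrable (fun ω => exp (t * X ω)) μ :=
    interior_subset (s := integrableExpSet X μ) ht
  have := isProbabilityMeasure_tilted hexp
  have hL2 : MemLp X 2 (μ.tilted (t * X ·)) :=
    mod_cast ProbabilityTheory.memLp_tilted_mul ht 2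
  have hmean := ProbabilityTheory.integral_tilted_mul_self ht
  have hvariance := ProbabilityTheory.variance_tilted_mul ht
  rw [ProbabilityTheory.variance_eq_integral hX.aemeasurable, hmean] at hvariance
  set m := deriv (cgf X μ) t
  set v := iteratedDeriv 2 (cgf X μ) t
  set c := cgf X μ t
  have hcentered : ∫ ω, (X ω - m) ∂(μ.tilted (t * X ·)) = 0 := by
    rw [integral_sub (hL2.integrable one_le_two) (integrable_const m), hmean]
    simp
  have htilt : ∫ ω in {ω | X ω - m ≤ e}, exp (-t * (X ω - m)) ∂(μ.tilted (t * X ·)) =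
      exp (t * m - c) * μ.real {ω | X ω - m ≤ e} := by
    have hconst (ω : Ω) : exp (t * X ω - c) • exp (-t * (X ω - m)) = exp (t * m - c) := by
      rw [smul_eq_mul, ← exp_add]; ring_nf
    rw [ProbabilityTheory.setIntegral_tilted_mul_eq_cgf _ _ hexp]
    simp only [c, hconst, setIntegral_const, smul_eq_mul, mul_comm]
  have hbound : exp (-(2 * -t * v / e)) / 2 ≤ exp (t * m - c) * μ.real {ω | X ω - m ≤ e} := by
    rw [← htilt, ← hvariance]
    exact half_exp_le_setIntegral_exp_of_integral_eq_zero (hL2.sub (memLp_const m))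
      (hX.sub_const m) hcentered (neg_nonneg.2 ht0) he (hvariance.symm ▸ hvar)
  calc exp (c - t * m + 2 * t * v / e) / 2
      = exp (c - t * m) * (exp (-(2 * -t * v / e)) / 2) := by
        rw [mul_div_assoc', ← exp_add]; ring_nf
    _ ≤ exp (c - t * m) * (exp (t * m - c) * μ.real {ω | X ω - m ≤ e}) := by gcongr
    _ = μ.real {ω | X ω ≤ m + e} := by
        rw [← mul_assoc, ← exp_add]
        simp [add_comm]

end ReverseChernoff

section GaussianSquares

open ProbabilityTheory (HasLaw cgf gaussianReal iIndepFun integrableExpSet mgf)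
open scoped NNReal Topology

/-- Cumulant generating function of the square of an `N(m, v)` variable at a point `s` with
`2 v s < 1`; for larger `s` the formula has no probabilistic meaning. -/
noncomputable def sqGaussianCGF (m : ℝ) (v : ℝ≥0) (s : ℝ) : ℝ :=
  s * m ^ 2 / (1 - 2 * v * s) - log (1 - 2 * v * s) / 2

lemma eventually_nhds_two_mul_mul_lt_one {v s : ℝ} (hs : 2 * v * s < 1) :
    ∀ᶠ u in 𝓝 s, 2 * v * u < 1 :=
  (continuous_const_mul (2 * v)).continuousAt.eventually_lt_const hs

lemma eventually_nhds_forall_two_mul_mul_lt_one {ι : Type*} [Finite ι] {v : ι → ℝ} {s : ℝ}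
    (hs : ∀ i, 2 * v i * s < 1) : ∀ᶠ u in 𝓝 s, ∀ i, 2 * v i * u < 1 :=
  Filter.eventually_all.2 fun i => eventually_nhds_two_mul_mul_lt_one (hs i)

lemma hasDerivAt_sqGaussianCGF {m : ℝ} {v : ℝ≥0} {s : ℝ} (hs : 2 * v * s < 1) :
    HasDerivAt (sqGaussianCGF m v)
      (v / (1 - 2 * v * s) + m ^ 2 / (1 - 2 * v * s) ^ 2) s := by
  have hpos : 0 < 1 - 2 * v * s := sub_pos.2 hs
  have hden : HasDerivAt (fun s : ℝ => 1 - 2 * v * s) (-(2 * v)) s := by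
    simpa using ((hasDerivAt_id s).const_mul (2 * v : ℝ)).const_sub 1
  convert! (((hasDerivAt_id s).mul_const (m ^ 2)).div hden hpos.ne').sub
    ((hden.log hpos.ne').div_const 2) using 1
  simp only [id_eq]
  field_simp
  ring

lemma hasDerivAt_deriv_sqGaussianCGF {m : ℝ} {v : ℝ≥0} {s : ℝ} (hs : 2 * v * s < 1) :
    HasDerivAt (deriv (sqGaussianCGF m v))
      (2 * v ^ 2 / (1 - 2 * v * s) ^ 2 + 4 * v * m ^ 2 / (1 - 2 * v * s) ^ 3) s := by
  have hpos : 0 < 1 - 2 * v * s := sub_pos.2 hs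
  have hden : HasDerivAt (fun s : ℝ => 1 - 2 * v * s) (-(2 * v)) s := by
    simpa using ((hasDerivAt_id s).const_mul (2 * v : ℝ)).const_sub 1
  have hderiv : deriv (sqGaussianCGF m v) =ᶠ[𝓝 s]
      fun s => v / (1 - 2 * v * s) + m ^ 2 / (1 - 2 * v * s) ^ 2 := by
    filter_upwards [eventually_nhds_two_mul_mul_lt_one hs] with u hu
    exact (hasDerivAt_sqGaussianCGF hu).deriv
  refine HasDerivAt.congr_of_eventuallyEq ?_ hderiv
  convert! ((hasDerivAt_const s (v : ℝ)).div hden hpos.ne').add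
    ((hasDerivAt_const s (m ^ 2)).div (hden.fun_pow 2) (pow_ne_zero 2 hpos.ne')) using 1
  field_simp
  ring

lemma integral_exp_mul_sq_gaussianReal {m : ℝ} {v : ℝ≥0} {s : ℝ} (hs : 2 * v * s < 1) :
    ∫ x, exp (s * x ^ 2) ∂(gaussianReal m v) = exp (sqGaussianCGF m v s) := by
  rcases eq_or_ne v 0 with rfl | hv
  · simp [sqGaussianCGF]
  set r : ℝ := 1 - 2 * v * s
  have hr : 0 < r := sub_pos.2 hs
  have hsquare (x : ℝ) : ProbabilityTheory.gaussianPDFReal m v x • exp (s * x ^ 2) =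
      (√(2 * π * v))⁻¹ * exp (s * m ^ 2 / r) * exp (-(r / (2 * v)) * (x - m / r) ^ 2) := by
    rw [ProbabilityTheory.gaussianPDFReal, smul_eq_mul, mul_assoc _ (exp _),
      mul_assoc _ (exp _), ← exp_add, ← exp_add]
    congr 2
    simp only [r] at hr ⊢
    field_simp
    ring
  rw [ProbabilityTheory.integral_gaussianReal_eq_integral_smul hv]
  simp only [hsquare]
  rw [integral_const_mul, integral_sub_right_eq_self fun x => exp (-(r / (2 * v)) * x ^ 2),
    integral_gaussian, sqGaussianCGF, exp_sub, ← log_sqrt hr.le, exp_log (sqrt_pos.2 hr)]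
  have hsqrt : √(π / (r / (2 * v))) = √(2 * π * v) / √r := by
    rw [← sqrt_div (by positivity)]; field_simp
  rw [hsqrt]
  simp only [r]
  field_simp

variable {Ω ι : Type*} {mΩ : MeasurableSpace Ω} {μ : Measure Ω} [Fintype ι] {X : ι → Ω → ℝ}
  {m : ι → ℝ} {v : ι → ℝ≥0} {s : ℝ}

lemma mgf_sum_sq_of_hasLaw_gaussianReal (hX : iIndepFun X μ)
    (hlaw : ∀ i, HasLaw (X i) (gaussianReal (m i) (v i)) μ) (hs : ∀ i, 2 * v i * s < 1) :
    mgf (fun ω => ∑ i, X i ω ^ 2) μ s = exp (∑ i, sqGaussianCGF (m i) (v i) s) := by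
  have hsq : iIndepFun (fun i ω => X i ω ^ 2) μ :=
    hX.comp (fun _ x => x ^ 2) fun _ => by fun_prop
  have hmgf (i : ι) : mgf (fun ω => X i ω ^ 2) μ s = exp (sqGaussianCGF (m i) (v i) s) := by
    rw [← integral_exp_mul_sq_gaussianReal (hs i), mgf]
    exact (hlaw i).integral_comp (f := fun x => exp (s * x ^ 2)) (by fun_prop)
  have hmeas (i : ι) : AEMeasurable (fun ω => X i ω ^ 2) μ := (hlaw i).aemeasurable.pow_const 2
  rw [← Finset.sum_fn, hsq.mgf_sum₀ hmeas, exp_sum]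
  exact Finset.prod_congr rfl fun i _ => hmgf i

lemma cgf_sum_sq_of_hasLaw_gaussianReal (hX : iIndepFun X μ)
    (hlaw : ∀ i, HasLaw (X i) (gaussianReal (m i) (v i)) μ) (hs : ∀ i, 2 * v i * s < 1) :
    cgf (fun ω => ∑ i, X i ω ^ 2) μ s = ∑ i, sqGaussianCGF (m i) (v i) s := by
  rw [cgf, mgf_sum_sq_of_hasLaw_gaussianReal hX hlaw hs, log_exp]

lemma mem_interior_integrableExpSet_sum_sq (hX : iIndepFun X μ)
    (hlaw : ∀ i, HasLaw (X i) (gaussianReal (m i) (v i)) μ) (hs : ∀ i, 2 * v i * s < 1) :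
    s ∈ interior (integrableExpSet (fun ω => ∑ i, X i ω ^ 2) μ) := by
  have := hX.isProbabilityMeasure
  rw [mem_interior_iff_mem_nhds]
  filter_upwards [eventually_nhds_forall_two_mul_mul_lt_one hs] with u hu
  refine ProbabilityTheory.mgf_pos_iff.1 ?_
  rw [mgf_sum_sq_of_hasLaw_gaussianReal hX hlaw hu]
  exact exp_pos _

lemma deriv_cgf_sum_sq_of_hasLaw_gaussianReal (hX : iIndepFun X μ)
    (hlaw : ∀ i, HasLaw (X i) (gaussianReal (m i) (v i)) μ) (hs : ∀ i, 2 * v i * s < 1) :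
    deriv (cgf (fun ω => ∑ i, X i ω ^ 2) μ) s =
      ∑ i, (v i / (1 - 2 * v i * s) + m i ^ 2 / (1 - 2 * v i * s) ^ 2) := by
  have hcgf : cgf (fun ω => ∑ i, X i ω ^ 2) μ =ᶠ[𝓝 s]
      fun u => ∑ i, sqGaussianCGF (m i) (v i) u := by
    filter_upwards [eventually_nhds_forall_two_mul_mul_lt_one hs] with u hu
    exact cgf_sum_sq_of_hasLaw_gaussianReal hX hlaw hu
  rw [hcgf.deriv_eq]
  exact (HasDerivAt.fun_sum fun i _ => hasDerivAt_sqGaussianCGF (hs i)).deriv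

lemma iteratedDeriv_two_cgf_sum_sq_of_hasLaw_gaussianReal (hX : iIndepFun X μ)
    (hlaw : ∀ i, HasLaw (X i) (gaussianReal (m i) (v i)) μ) (hs : ∀ i, 2 * v i * s < 1) :
    iteratedDeriv 2 (cgf (fun ω => ∑ i, X i ω ^ 2) μ) s =
      ∑ i, (2 * v i ^ 2 / (1 - 2 * v i * s) ^ 2 +
        4 * v i * m i ^ 2 / (1 - 2 * v i * s) ^ 3) := by
  have hderiv : deriv (cgf (fun ω => ∑ i, X i ω ^ 2) μ) =ᶠ[𝓝 s]
      fun u => ∑ i, deriv (sqGaussianCGF (m i) (v i)) u := by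
    filter_upwards [eventually_nhds_forall_two_mul_mul_lt_one hs] with u hu
    rw [deriv_cgf_sum_sq_of_hasLaw_gaussianReal hX hlaw hu]
    exact Finset.sum_congr rfl fun i _ => (hasDerivAt_sqGaussianCGF (hu i)).deriv.symm
  rw [iteratedDeriv_succ, iteratedDeriv_one, hderiv.deriv_eq]
  exact (HasDerivAt.fun_sum fun i _ => hasDerivAt_deriv_sqGaussianCGF (hs i)).deriv

end GaussianSquares

section GaussianQuadraticForm

open ProbabilityTheory (HasLaw cgf gaussianReal iIndepFun integrableExpSet)

variable {ι : Type*} [Fintype ι] {lam w : ι → ℝ} {T τ δ : ℝ}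

lemma hasLaw_sqrt_mul_sub_mul_gaussianReal (hlam : ∀ i, 0 ≤ lam i) (i : ι) :
    HasLaw (fun g : ι → ℝ => √(lam i) * (w i - τ * g i))
      (gaussianReal (√(lam i) * w i) (lam i * τ ^ 2).toNNReal)
      (Measure.pi fun _ => gaussianReal 0 1) := by
  have heval : HasLaw (fun g : ι → ℝ => g i) (gaussianReal 0 1)
      (Measure.pi fun _ => gaussianReal 0 1) :=
    (measurePreserving_eval (fun _ : ι => gaussianReal 0 1) i).hasLaw
  convert! ProbabilityTheory.gaussianReal_const_mul (ProbabilityTheory.gaussianReal_const_sub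
    (ProbabilityTheory.gaussianReal_const_mul heval τ) (w i)) √(lam i) using 2
  · simp
  · ext
    simp [sq_sqrt (hlam i), mul_nonneg (hlam i) (sq_nonneg τ)]

lemma iIndepFun_sqrt_mul_sub_mul :
    iIndepFun (fun i (g : ι → ℝ) => √(lam i) * (w i - τ * g i))
      (Measure.pi fun _ => gaussianReal 0 1) :=
  ProbabilityTheory.iIndepFun_pi (X := fun i x => √(lam i) * (w i - τ * x)) fun _ => by fun_prop

lemma sum_tilted_mean_eq (hlam : ∀ i, 0 ≤ lam i) (hT : 0 < T)
    (hτ : τ ^ 2 * ∑ i, lam i / (1 + lam i * T) =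
      T * ∑ i, w i ^ 2 * lam i ^ 2 / (1 + lam i * T) ^ 2) :
    ∑ i, (lam i * τ ^ 2 / (1 + lam i * T) + lam i * w i ^ 2 / (1 + lam i * T) ^ 2) =
      ∑ i, w i ^ 2 * lam i / (1 + lam i * T) := by
  have hpos (i : ι) : 0 < 1 + lam i * T := by have := hlam i; positivity
  have hfirst : ∑ i, lam i * τ ^ 2 / (1 + lam i * T) =
      ∑ i, T * (w i ^ 2 * lam i ^ 2 / (1 + lam i * T) ^ 2) := by
    rw [← Finset.mul_sum, ← hτ, Finset.mul_sum]
    exact Finset.sum_congr rfl fun i _ => by ring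
  rw [Finset.sum_add_distrib, hfirst, ← Finset.sum_add_distrib]
  refine Finset.sum_congr rfl fun i _ => ?_
  calc _ = w i ^ 2 * lam i * (1 + lam i * T) / ((1 + lam i * T) * (1 + lam i * T)) := by ring
    _ = w i ^ 2 * lam i / (1 + lam i * T) := mul_div_mul_right _ _ (hpos i).ne'

lemma mul_sum_sq_le_sum (hlam : ∀ i, 0 ≤ lam i) (hT : 0 < T) :
    T * ∑ i, w i ^ 2 * lam i ^ 2 / (1 + lam i * T) ^ 2 ≤
      ∑ i, w i ^ 2 * lam i / (1 + lam i * T) := by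
  rw [Finset.mul_sum]
  refine Finset.sum_le_sum fun i _ => ?_
  have := hlam i
  have hratio : lam i * T / (1 + lam i * T) ≤ 1 := (div_le_one (by positivity)).2 (by linarith)
  calc T * (w i ^ 2 * lam i ^ 2 / (1 + lam i * T) ^ 2)
      = w i ^ 2 * lam i / (1 + lam i * T) * (lam i * T / (1 + lam i * T)) := by
        field_simp
    _ ≤ w i ^ 2 * lam i / (1 + lam i * T) := mul_le_of_le_one_right (by positivity) hratio

lemma mul_sum_tilted_variance_le (hlam : ∀ i, 0 ≤ lam i) (hT : 0 < T)
    (hτ : τ ^ 2 * ∑ i, lam i / (1 + lam i * T) =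
      T * ∑ i, w i ^ 2 * lam i ^ 2 / (1 + lam i * T) ^ 2) :
    T * ∑ i, (2 * (lam i * τ ^ 2) ^ 2 / (1 + lam i * T) ^ 2 +
        4 * (lam i * τ ^ 2) * (lam i * w i ^ 2) / (1 + lam i * T) ^ 3) ≤
      6 * τ ^ 2 * ∑ i, w i ^ 2 * lam i / (1 + lam i * T) := by
  have hterm (i : ι) : T * (2 * (lam i * τ ^ 2) ^ 2 / (1 + lam i * T) ^ 2 +
        4 * (lam i * τ ^ 2) * (lam i * w i ^ 2) / (1 + lam i * T) ^ 3) ≤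
      2 * τ ^ 4 * (lam i / (1 + lam i * T)) +
        4 * τ ^ 2 * (T * (w i ^ 2 * lam i ^ 2 / (1 + lam i * T) ^ 2)) := by
    have := hlam i
    have hratio : lam i * T / (1 + lam i * T) ≤ 1 := (div_le_one (by positivity)).2 (by linarith)
    have hinv : 1 / (1 + lam i * T) ≤ 1 :=
      (div_le_one (by positivity)).2 (le_add_of_nonneg_right (by positivity))
    calc _ = 2 * τ ^ 4 * (lam i / (1 + lam i * T)) * (lam i * T / (1 + lam i * T)) +
          4 * τ ^ 2 * (T * (w i ^ 2 * lam i ^ 2 / (1 + lam i * T) ^ 2)) *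
            (1 / (1 + lam i * T)) := by field_simp
      _ ≤ _ := add_le_add (mul_le_of_le_one_right (by positivity) hratio)
        (mul_le_of_le_one_right (by positivity) hinv)
  calc _ ≤ ∑ i, (2 * τ ^ 4 * (lam i / (1 + lam i * T)) +
        4 * τ ^ 2 * (T * (w i ^ 2 * lam i ^ 2 / (1 + lam i * T) ^ 2))) := by
        rw [Finset.mul_sum]; exact Finset.sum_le_sum fun i _ => hterm i
    _ = 2 * τ ^ 2 * (τ ^ 2 * ∑ i, lam i / (1 + lam i * T)) +
        4 * τ ^ 2 * (T * ∑ i, w i ^ 2 * lam i ^ 2 / (1 + lam i * T) ^ 2) := by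
        simp only [Finset.sum_add_distrib, ← Finset.mul_sum]; ring
    _ = 6 * τ ^ 2 * (T * ∑ i, w i ^ 2 * lam i ^ 2 / (1 + lam i * T) ^ 2) := by rw [hτ]; ring
    _ ≤ _ := by gcongr; exact mul_sum_sq_le_sum hlam hT

lemma half_exp_tilted_le_measureReal_sum_mul_sq_le {t : ℝ} (hlam : ∀ i, 0 ≤ lam i) (ht : t ≤ 0)
    (hT : T = -(2 * τ ^ 2 * t)) (hδ : 0 < δ)
    (hvar : 2 * ∑ i, (2 * (lam i * τ ^ 2) ^ 2 / (1 + lam i * T) ^ 2 +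
      4 * (lam i * τ ^ 2) * (lam i * w i ^ 2) / (1 + lam i * T) ^ 3) ≤ δ ^ 2) :
    exp (∑ i, (t * (lam i * w i ^ 2) / (1 + lam i * T) - log (1 + lam i * T) / 2) -
        t * ∑ i, (lam i * τ ^ 2 / (1 + lam i * T) + lam i * w i ^ 2 / (1 + lam i * T) ^ 2) +
        2 * t * (∑ i, (2 * (lam i * τ ^ 2) ^ 2 / (1 + lam i * T) ^ 2 +
          4 * (lam i * τ ^ 2) * (lam i * w i ^ 2) / (1 + lam i * T) ^ 3)) / δ) / 2 ≤
      (Measure.pi fun _ : ι => gaussianReal 0 1).real {g | ∑ i, lam i * (w i - τ * g i) ^ 2 ≤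
        ∑ i, (lam i * τ ^ 2 / (1 + lam i * T) + lam i * w i ^ 2 / (1 + lam i * T) ^ 2) + δ} := by
  have hvar_coe (i : ι) : ((lam i * τ ^ 2).toNNReal : ℝ) = lam i * τ ^ 2 :=
    coe_toNNReal _ (mul_nonneg (hlam i) (sq_nonneg τ))
  have hden (i : ι) : 1 - 2 * (lam i * τ ^ 2) * t = 1 + lam i * T := by rw [hT]; ring
  have hdomain (i : ι) : 2 * ((lam i * τ ^ 2).toNNReal : ℝ) * t < 1 :=
    (mul_nonpos_of_nonneg_of_nonpos (by positivity) ht).trans_lt one_pos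
  have hindep : iIndepFun (fun i (g : ι → ℝ) => √(lam i) * (w i - τ * g i)) _ :=
    iIndepFun_sqrt_mul_sub_mul
  have hlaw := fun i => hasLaw_sqrt_mul_sub_mul_gaussianReal (w := w) (τ := τ) hlam i
  have hcgf := cgf_sum_sq_of_hasLaw_gaussianReal hindep hlaw hdomain
  have hmean := deriv_cgf_sum_sq_of_hasLaw_gaussianReal hindep hlaw hdomain
  have hvariance := iteratedDeriv_two_cgf_sum_sq_of_hasLaw_gaussianReal hindep hlaw hdomain
  have hmem := mem_interior_integrableExpSet_sum_sq hindep hlaw hdomain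
  simp only [sqGaussianCGF, hvar_coe, hden, mul_pow √(lam _), sq_sqrt (hlam _)]
    at hcgf hmean hvariance hmem
  have hbound := half_exp_cgf_le_measureReal_le (by fun_prop) hmem ht hδ (e := δ)
  rw [hcgf, hmean, hvariance] at hbound
  exact hbound hvar

lemma half_exp_le_measureReal_sum_mul_sq_le_of_ne_zero (hlam : ∀ i, 0 ≤ lam i) (hT : 0 < T)
    (hτ : τ ^ 2 * ∑ i, lam i / (1 + lam i * T) =
      T * ∑ i, w i ^ 2 * lam i ^ 2 / (1 + lam i * T) ^ 2)
    (hτ0 : τ ≠ 0) (hδ : 0 < δ)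
    (hsmall : 12 * τ ^ 2 * ∑ i, w i ^ 2 * lam i / (1 + lam i * T) ≤ T * δ ^ 2) :
    exp (-(∑ i, log (1 + lam i * T)) / 2 - 6 * (∑ i, w i ^ 2 * lam i / (1 + lam i * T)) / δ) / 2 ≤
      (Measure.pi fun _ : ι => gaussianReal 0 1).real
        {g | ∑ i, lam i * (w i - τ * g i) ^ 2 ≤
          ∑ i, w i ^ 2 * lam i / (1 + lam i * T) + δ} := by
  set t : ℝ := -T / (2 * τ ^ 2) with ht_def
  have ht : t ≤ 0 := div_nonpos_of_nonpos_of_nonneg (neg_nonpos.2 hT.le) (by positivity)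
  have htT : T = -(2 * τ ^ 2 * t) := by rw [ht_def]; field_simp
  have hV := mul_sum_tilted_variance_le hlam hT hτ
  have hbound := half_exp_tilted_le_measureReal_sum_mul_sq_le (w := w) hlam ht htT hδ
  rw [sum_tilted_mean_eq hlam hT hτ] at hbound
  set S := ∑ i, w i ^ 2 * lam i / (1 + lam i * T)
  set V := ∑ i, (2 * (lam i * τ ^ 2) ^ 2 / (1 + lam i * T) ^ 2 +
    4 * (lam i * τ ^ 2) * (lam i * w i ^ 2) / (1 + lam i * T) ^ 3)
  have hrate : ∑ i, (t * (lam i * w i ^ 2) / (1 + lam i * T) - log (1 + lam i * T) / 2) - t * S =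
      -(∑ i, log (1 + lam i * T)) / 2 := by
    rw [Finset.sum_sub_distrib, ← Finset.sum_div, Finset.mul_sum, sub_right_comm,
      ← Finset.sum_sub_distrib, Finset.sum_eq_zero fun i _ => by ring]
    ring
  have hloss : -(6 * S / δ) ≤ 2 * t * V / δ := by
    rw [← neg_div]
    gcongr
    calc -(6 * S) = -(6 * τ ^ 2 * S) / τ ^ 2 := by field_simp
      _ ≤ -(T * V) / τ ^ 2 := by gcongr
      _ = 2 * t * V := by rw [ht_def]; field_simp
  refine le_trans ?_ (hbound (le_of_mul_le_mul_left (by linarith) hT))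
  rw [hrate]
  gcongr
  linarith

lemma half_exp_le_measureReal_sum_mul_sq_le (hlam : ∀ i, 0 ≤ lam i) (hT : 0 < T)
    (hτ : τ ^ 2 * ∑ i, lam i / (1 + lam i * T) =
      T * ∑ i, w i ^ 2 * lam i ^ 2 / (1 + lam i * T) ^ 2)
    (hδ : 0 < δ)
    (hsmall : 12 * τ ^ 2 * ∑ i, w i ^ 2 * lam i / (1 + lam i * T) ≤ T * δ ^ 2) :
    exp (-(∑ i, log (1 + lam i * T)) / 2 - 6 * (∑ i, w i ^ 2 * lam i / (1 + lam i * T)) / δ) / 2 ≤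
      (Measure.pi fun _ : ι => gaussianReal 0 1).real
        {g | ∑ i, lam i * (w i - τ * g i) ^ 2 ≤
          ∑ i, w i ^ 2 * lam i / (1 + lam i * T) + δ} := by
  rcases ne_or_eq τ 0 with hτ0 | rfl
  · exact half_exp_le_measureReal_sum_mul_sq_le_of_ne_zero hlam hT hτ hτ0 hδ hsmall
  have hfac (i : ι) : 1 ≤ 1 + lam i * T := le_add_of_nonneg_right (mul_nonneg (hlam i) hT.le)
  have hS : 0 ≤ ∑ i, w i ^ 2 * lam i / (1 + lam i * T) :=
    Finset.sum_nonneg fun i _ => by have := hlam i; positivity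
  have hlog : 0 ≤ ∑ i, log (1 + lam i * T) := Finset.sum_nonneg fun i _ => log_nonneg (hfac i)
  have hsum : ∑ i, w i ^ 2 * lam i ^ 2 / (1 + lam i * T) ^ 2 = 0 := by
    simpa [hT.ne', eq_comm] using hτ
  have hzero (i : ι) : lam i * w i ^ 2 = 0 := by
    have hi := (Finset.sum_eq_zero_iff_of_nonneg fun i _ => by positivity).1 hsum i
      (Finset.mem_univ i)
    have := (zero_lt_one.trans_le (hfac i)).ne'
    simp_all [or_comm]
  have huniv : {g : ι → ℝ | ∑ i, lam i * (w i - 0 * g i) ^ 2 ≤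
      ∑ i, w i ^ 2 * lam i / (1 + lam i * T) + δ} = Set.univ :=
    Set.eq_univ_of_forall fun g => by
      simp only [zero_mul, sub_zero, hzero, Finset.sum_const_zero, Set.mem_ofPred_eq]
      positivity
  rw [huniv, probReal_univ]
  have : exp (-(∑ i, log (1 + lam i * T)) / 2 -
      6 * (∑ i, w i ^ 2 * lam i / (1 + lam i * T)) / δ) ≤ 1 := by
    refine exp_le_one_iff.2 ?_
    have := div_nonneg (mul_nonneg (by norm_num : (0 : ℝ) ≤ 6) hS) hδ.le
    linarith
  linarith

end GaussianQuadraticForm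

section Rotation

open scoped RealInnerProductSpace

variable {n : ℕ}

lemma measurePreserving_mulVec_stdGaussian {A : Matrix (Fin n) (Fin n) ℝ} (hA : Aᵀ * A = 1) :
    MeasurePreserving (A *ᵥ ·) (stdGaussian n) (stdGaussian n) := by
  let f₀ : EuclideanSpace ℝ (Fin n) →ₗ[ℝ] EuclideanSpace ℝ (Fin n) := Matrix.toEuclideanLin A
  have hinner (x y : EuclideanSpace ℝ (Fin n)) : ⟪f₀ x, f₀ y⟫ = ⟪x, y⟫ := by
    simp only [f₀, EuclideanSpace.inner_eq_star_dotProduct, Matrix.ofLp_toLpLin, star_trivial,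
      Matrix.toLin'_apply, Matrix.dotProduct_mulVec, ← Matrix.mulVec_transpose,
      Matrix.mulVec_mulVec, hA, Matrix.one_mulVec]
  let f := (f₀.isometryOfInner hinner).toLinearIsometryEquiv rfl
  have htoLp : MeasurePreserving (MeasurableEquiv.toLp 2 (Fin n → ℝ)) (stdGaussian n)
      (ProbabilityTheory.stdGaussian (EuclideanSpace ℝ (Fin n))) :=
    ⟨by fun_prop, ProbabilityTheory.map_pi_eq_stdGaussian⟩
  have hf : MeasurePreserving f (ProbabilityTheory.stdGaussian (EuclideanSpace ℝ (Fin n)))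
      (ProbabilityTheory.stdGaussian (EuclideanSpace ℝ (Fin n))) :=
    ⟨by fun_prop, ProbabilityTheory.stdGaussian_map f⟩
  exact (htoLp.symm _).comp (hf.comp htoLp)

end Rotation

section RandomCodingRate

variable {n : ℕ} {lam : Fin n → ℝ} {R T : ℝ}

lemma sum_log_one_add_mul_eq (hn : 0 < n) :
    ∑ i, log (1 + lam i * T) = 2 * n * Rrc lam T * log 2 := by
  have hn' : (n : ℝ) ≠ 0 := mod_cast hn.ne'
  have hlog2 : log 2 ≠ 0 := (log_pos one_lt_two).ne'
  simp only [Rrc, logb, ← Finset.sum_div]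
  field_simp
  simp only [mul_comm]

lemma two_mul_Rrc_mul_log_two_le (hn : 0 < n) (hlam : ∀ i, 0 ≤ lam i)
    (hsum : ∑ i, lam i = n) (hT : 0 ≤ T) : 2 * Rrc lam T * log 2 ≤ T := by
  have hlog : ∑ i, log (1 + lam i * T) ≤ n * T :=
    calc ∑ i, log (1 + lam i * T) ≤ ∑ i, lam i * T := Finset.sum_le_sum fun i _ => by
          have := mul_nonneg (hlam i) hT
          linarith [log_le_sub_one_of_pos (by positivity : 0 < 1 + lam i * T)]
      _ = n * T := by rw [← Finset.sum_mul, hsum]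
  rw [sum_log_one_add_mul_eq hn] at hlog
  exact le_of_mul_le_mul_left (by linarith) (Nat.cast_pos.2 hn)

lemma continuousOn_Rrc (hlam : ∀ i, 0 ≤ lam i) : ContinuousOn (Rrc lam) (Set.Ici 0) := by
  unfold Rrc logb
  refine continuousOn_const.mul (continuousOn_finsetSum _ fun i _ => ?_)
  refine ContinuousOn.div_const (ContinuousOn.log (by fun_prop) fun T hT => ?_) _
  have := mul_nonneg (hlam i) (Set.mem_Ici.1 hT)
  positivity

lemma tendsto_Rrc_atTop (hlam : ∀ i, 0 ≤ lam i) (hpos : ∃ i, 0 < lam i) :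
    Filter.Tendsto (Rrc lam) Filter.atTop Filter.atTop := by
  obtain ⟨j, hj⟩ := hpos
  have hn : (0 : ℝ) < n := Nat.cast_pos.2 (Nat.zero_lt_of_lt j.isLt)
  have hlogb : Filter.Tendsto (fun T => logb 2 (1 + lam j * T)) Filter.atTop Filter.atTop :=
    (tendsto_logb_atTop one_lt_two).comp
      (Filter.tendsto_atTop_add_const_left _ 1 (Filter.tendsto_id.const_mul_atTop hj))
  refine Filter.Tendsto.const_mul_atTop (by positivity)
    (Filter.tendsto_atTop_mono' _ ?_ hlogb)
  filter_upwards [Filter.eventually_ge_atTop 0] with T hT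
  refine Finset.single_le_sum (f := fun i => logb 2 (1 + lam i * T)) (fun i _ => ?_)
    (Finset.mem_univ j)
  exact logb_nonneg one_lt_two (le_add_of_nonneg_right (mul_nonneg (hlam i) hT))

lemma Trc_spec (hlam : ∀ i, 0 ≤ lam i) (hpos : ∃ i, 0 < lam i) (hR : 0 < R) :
    0 < Trc lam R ∧ Rrc lam (Trc lam R) = R := by
  apply Classical.epsilon_spec (p := fun T => 0 < T ∧ Rrc lam T = R)
  have hzero : Rrc lam 0 = 0 := by simp [Rrc]
  obtain ⟨b, hRb, hb⟩ := ((tendsto_Rrc_atTop hlam hpos).eventually_ge_atTop R |>.and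
    (Filter.eventually_ge_atTop 0)).exists
  obtain ⟨T, hT, hTR⟩ := intermediate_value_Icc hb
    ((continuousOn_Rrc hlam).mono Set.Icc_subset_Ici_self) ⟨hzero.trans_le hR.le, hRb⟩
  refine ⟨T, hT.1.lt_of_ne fun h => ?_, hTR⟩
  rw [← h, hzero] at hTR
  exact hR.ne hTR

end RandomCodingRate

section Scaling

lemma sum_sq_mul_div_le_norm_sq_mul_sum {ι : Type*} [Fintype ι] {lam : ι → ℝ} (w : ι → ℝ) {T : ℝ}
    (hlam : ∀ i, 0 ≤ lam i) (hT : 0 ≤ T) :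
    ∑ i, w i ^ 2 * lam i / (1 + lam i * T) ≤ ‖w‖ ^ 2 * ∑ i, lam i := by
  rw [Finset.mul_sum]
  refine Finset.sum_le_sum fun i _ => ?_
  have := hlam i
  have hw : w i ^ 2 ≤ ‖w‖ ^ 2 := sq_le_sq.2 (by simpa using norm_le_pi_norm w i)
  calc w i ^ 2 * lam i / (1 + lam i * T) ≤ w i ^ 2 * lam i :=
        div_le_self (by positivity) (le_add_of_nonneg_right (by positivity))
    _ ≤ ‖w‖ ^ 2 * lam i := by gcongr

variable {n : ℕ} {lam : Fin n → ℝ} (w : Fin n → ℝ) {T : ℝ}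

lemma tauDef_sq (hlam : ∀ i, 0 ≤ lam i) (hT : 0 ≤ T) :
    tauDef lam w T ^ 2 = (T * ∑ i, w i ^ 2 * lam i ^ 2 / (1 + lam i * T) ^ 2) /
      ∑ i, lam i / (1 + lam i * T) := by
  have hpos (i : Fin n) : 0 ≤ 1 + lam i * T := by have := hlam i; positivity
  rw [tauDef, div_pow, sq_sqrt (by positivity),
    sq_sqrt (Finset.sum_nonneg fun i _ => div_nonneg (hlam i) (hpos i))]

/-- This is the stationarity condition on `τ`. If the left-hand sum vanishes then `lam = 0`, so the
division by zero in `tauDef` is harmless. -/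
lemma tauDef_sq_mul_sum (hlam : ∀ i, 0 ≤ lam i) (hT : 0 ≤ T) :
    tauDef lam w T ^ 2 * ∑ i, lam i / (1 + lam i * T) =
      T * ∑ i, w i ^ 2 * lam i ^ 2 / (1 + lam i * T) ^ 2 := by
  have hpos (i : Fin n) : 0 < 1 + lam i * T := by have := hlam i; positivity
  rw [tauDef_sq w hlam hT]
  refine div_mul_cancel_of_imp fun hzero => ?_
  have hlam_zero (i : Fin n) : lam i = 0 := by
    have := (Finset.sum_eq_zero_iff_of_nonneg fun i _ => div_nonneg (hlam i) (hpos i).le).1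
      hzero i (Finset.mem_univ i)
    exact (div_eq_zero_iff.1 this).resolve_right (hpos i).ne'
  simp [hlam_zero]

lemma tauDef_sq_le_norm_sq (hlam : ∀ i, 0 ≤ lam i) (hT : 0 ≤ T) :
    tauDef lam w T ^ 2 ≤ ‖w‖ ^ 2 := by
  have hpos (i : Fin n) : 0 < 1 + lam i * T := by have := hlam i; positivity
  rw [tauDef_sq w hlam hT]
  refine div_le_of_le_mul₀ (Finset.sum_nonneg fun i _ => div_nonneg (hlam i) (hpos i).le)
    (by positivity) ?_
  rw [Finset.mul_sum, Finset.mul_sum]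
  refine Finset.sum_le_sum fun i _ => ?_
  have := hlam i
  have := hpos i
  have hw : w i ^ 2 ≤ ‖w‖ ^ 2 := sq_le_sq.2 (by simpa using norm_le_pi_norm w i)
  have hratio : lam i * T / (1 + lam i * T) ≤ 1 := (div_le_one (by positivity)).2 (by linarith)
  calc T * (w i ^ 2 * lam i ^ 2 / (1 + lam i * T) ^ 2)
      = w i ^ 2 * (lam i / (1 + lam i * T)) * (lam i * T / (1 + lam i * T)) := by field_simp
    _ ≤ w i ^ 2 * (lam i / (1 + lam i * T)) := mul_le_of_le_one_right (by positivity) hratio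
    _ ≤ ‖w‖ ^ 2 * (lam i / (1 + lam i * T)) := by gcongr

end Scaling

section Codebook

lemma one_sub_exp_neg_card_mul_le_pi_exists_mem {κ Ω : Type*} [Fintype κ] {mΩ : MeasurableSpace Ω}
    (P : Measure Ω) [IsProbabilityMeasure P] {A : Set Ω} (hA : MeasurableSet A) :
    1 - exp (-(Fintype.card κ * P.real A)) ≤
      (Measure.pi fun _ : κ => P).real {C | ∃ i, C i ∈ A} := by
  have hcompl : {C : κ → Ω | ∃ i, C i ∈ A} = (Set.univ.pi fun _ => Aᶜ)ᶜ := by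
    ext C; simp
  have hmiss : (Measure.pi fun _ : κ => P).real (Set.univ.pi fun _ => Aᶜ) =
      (1 - P.real A) ^ Fintype.card κ := by
    rw [← probReal_compl_eq_one_sub hA]
    simp [Measure.real, Measure.pi_pi]
  rw [hcompl, probReal_compl_eq_one_sub (MeasurableSet.univ_pi fun _ => hA.compl), hmiss]
  have hpow : (1 - P.real A) ^ Fintype.card κ ≤ exp (-P.real A) ^ Fintype.card κ :=
    pow_le_pow_left₀ (sub_nonneg.2 measureReal_le_one) (one_sub_le_exp_neg _) _
  rw [← exp_nat_mul, mul_neg] at hpow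
  linarith

lemma half_le_natFloor {x : ℝ} (hx : 1 ≤ x) : x / 2 ≤ ⌊x⌋₊ := by
  have hfloor : (1 : ℝ) ≤ ⌊x⌋₊ := mod_cast Nat.le_floor (by simpa using hx)
  linarith [Nat.lt_floor_add_one x]

variable {n : ℕ} {lam : Fin n → ℝ} {U : Matrix (Fin n) (Fin n) ℝ} {R η : ℝ}

instance : IsProbabilityMeasure (stdGaussian n) :=
  inferInstanceAs (IsProbabilityMeasure (Measure.pi fun _ => _))

instance {M : ℕ} : IsProbabilityMeasure (codebookMeasure n M) :=
  inferInstanceAs (IsProbabilityMeasure (Measure.pi fun _ => _))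

lemma dSig_mul_diagonal_mul_transpose (W c : Fin n → ℝ) (τ : ℝ) :
    dSig (U * Matrix.diagonal lam * Uᵀ) W (τ • c) =
      ∑ i, lam i * ((Uᵀ *ᵥ W) i - τ * (Uᵀ *ᵥ c) i) ^ 2 := by
  unfold dSig
  rw [← mulVec_mulVec, ← mulVec_mulVec, dotProduct_mulVec, ← mulVec_transpose, mulVec_sub,
    mulVec_smul]
  simp only [dotProduct, mulVec_diagonal, Pi.sub_apply, Pi.smul_apply, smul_eq_mul]
  exact Finset.sum_congr rfl fun i _ => by ring

lemma natCast_mul_DrcV (hn : 0 < n) (V : Fin n → ℝ) (T : ℝ) :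
    n * DrcV lam V T = ∑ i, V i ^ 2 * lam i / (1 + lam i * T) := by
  rw [DrcV, ← mul_assoc, mul_one_div_cancel (by positivity), one_mul]

lemma half_exp_le_stdGaussian_dSig_le (hn : 0 < n) (hU : U * Uᵀ = 1) (hlam : ∀ i, 0 ≤ lam i)
    (hsum : ∑ i, lam i = n) (W : Fin n → ℝ) (hR : 0 < R) (hη : 0 < η)
    (hsmall : 6 * ‖Uᵀ *ᵥ W‖ ^ 4 ≤ R * log 2 * n * η ^ 2) :
    exp (-(n * R * log 2) - 6 * ‖Uᵀ *ᵥ W‖ ^ 2 / η) / 2 ≤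
      (stdGaussian n).real {c | dSig (U * Matrix.diagonal lam * Uᵀ) W
        (tauDef lam (Uᵀ *ᵥ W) (Trc lam R) • c) ≤ n * (DDrcV lam (Uᵀ *ᵥ W) R + η)} := by
  have hn' : (0 : ℝ) < n := Nat.cast_pos.2 hn
  have hpos : ∃ i, 0 < lam i := by
    by_contra! h
    linarith [Finset.sum_nonpos fun i (_ : i ∈ Finset.univ) => h i]
  obtain ⟨hT, hTR⟩ := Trc_spec hlam hpos hR
  have hTlower := two_mul_Rrc_mul_log_two_le hn hlam hsum hT.le
  have hlog : ∑ i, log (1 + lam i * Trc lam R) = _ := sum_log_one_add_mul_eq hn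
  rw [hTR] at hTlower hlog
  set w := Uᵀ *ᵥ W
  set T := Trc lam R
  set τ := tauDef lam w T
  have hτ : τ ^ 2 ≤ ‖w‖ ^ 2 := tauDef_sq_le_norm_sq w hlam hT.le
  have hS : ∑ i, w i ^ 2 * lam i / (1 + lam i * T) ≤ n * ‖w‖ ^ 2 := by
    rw [mul_comm, ← hsum]
    exact sum_sq_mul_div_le_norm_sq_mul_sum w hlam hT.le
  have hvariance :
      12 * τ ^ 2 * ∑ i, w i ^ 2 * lam i / (1 + lam i * T) ≤ T * (n * η) ^ 2 :=
    calc 12 * τ ^ 2 * ∑ i, w i ^ 2 * lam i / (1 + lam i * T)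
        ≤ 12 * (‖w‖ ^ 2 * (n * ‖w‖ ^ 2)) := by
          rw [mul_assoc]
          gcongr
          exact Finset.sum_nonneg fun i _ => by have := hlam i; positivity
      _ = 2 * n * (6 * ‖w‖ ^ 4) := by ring
      _ ≤ 2 * n * (R * log 2 * n * η ^ 2) := by gcongr
      _ = (2 * R * log 2) * (n * η) ^ 2 := by ring
      _ ≤ T * (n * η) ^ 2 := by gcongr
  have hball : {c : Fin n → ℝ | dSig (U * Matrix.diagonal lam * Uᵀ) W (τ • c) ≤
      n * (DDrcV lam w R + η)} = (Uᵀ *ᵥ ·) ⁻¹' {g | ∑ i, lam i * (w i - τ * g i) ^ 2 ≤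
        ∑ i, w i ^ 2 * lam i / (1 + lam i * T) + n * η} := by
    ext c
    simp only [dSig_mul_diagonal_mul_transpose, DDrcV, mul_add, natCast_mul_DrcV hn,
      Set.mem_ofPred_eq, Set.mem_preimage, w, T]
  have hrot := measurePreserving_mulVec_stdGaussian (A := Uᵀ) (by rwa [transpose_transpose])
  rw [hball, hrot.measureReal_preimage
    (measurableSet_le (by fun_prop) measurable_const).nullMeasurableSet]
  refine le_trans ?_ (half_exp_le_measureReal_sum_mul_sq_le hlam hT (tauDef_sq_mul_sum w hlam hT.le)
    (by positivity) hvariance)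
  have hloss : 6 * (∑ i, w i ^ 2 * lam i / (1 + lam i * T)) / (n * η) ≤ 6 * ‖w‖ ^ 2 / η :=
    calc _ ≤ 6 * (n * ‖w‖ ^ 2) / (n * η) := by gcongr
      _ = 6 * ‖w‖ ^ 2 / η := by field_simp
  rw [hlog]
  gcongr
  linarith

lemma one_sub_exp_neg_mul_le_codebookMeasure_iInf_dSig_le {Sig : Matrix (Fin n) (Fin n) ℝ}
    (hSig : Sig.PosSemidef) (hn : 0 < n) (M : ℕ) (W : Fin n → ℝ) (τ d : ℝ) :
    1 - exp (-(M * (stdGaussian n).real {c | dSig Sig W (τ • c) ≤ n * d})) ≤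
      (codebookMeasure n M).real {C | 1 / n * (⨅ i, dSig Sig W (τ • C i)) ≤ d} := by
  set success : Set (Fin n → ℝ) := {c | dSig Sig W (τ • c) ≤ n * d}
  have hsuccess : MeasurableSet success := by
    refine measurableSet_le ?_ measurable_const
    unfold dSig dotProduct mulVec
    fun_prop
  have hsubset : {C : Fin M → Fin n → ℝ | ∃ i, C i ∈ success} ⊆
      {C | 1 / n * (⨅ i, dSig Sig W (τ • C i)) ≤ d} := by
    rintro C ⟨i, hi⟩
    have hbdd : BddBelow (Set.range fun j => dSig Sig W (τ • C j)) :=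
      ⟨0, by rintro _ ⟨j, rfl⟩; exact hSig.dotProduct_mulVec_nonneg _⟩
    rw [Set.mem_ofPred_eq, one_div, inv_mul_le_iff₀ (by positivity)]
    exact (ciInf_le hbdd i).trans hi
  calc 1 - exp (-(M * (stdGaussian n).real success))
      = 1 - exp (-(Fintype.card (Fin M) * (stdGaussian n).real success)) := by
        rw [Fintype.card_fin]
    _ ≤ (codebookMeasure n M).real {C | ∃ i, C i ∈ success} :=
        one_sub_exp_neg_card_mul_le_pi_exists_mem (stdGaussian n) hsuccess
    _ ≤ _ := measureReal_mono hsubset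

lemma one_sub_exp_le_codebookMeasure_iInf_dSig_le {ε : ℝ} (hn : 0 < n) (hU : U * Uᵀ = 1)
    (hlam : ∀ i, 0 ≤ lam i) (hsum : ∑ i, lam i = n) (W : Fin n → ℝ) (hR : 0 < R) (hη : 0 < η)
    (hε : 0 ≤ R + ε) (hsmall : 6 * ‖Uᵀ *ᵥ W‖ ^ 4 ≤ R * log 2 * n * η ^ 2) :
    1 - exp (-((2 : ℝ) ^ (n * ε) * exp (-(6 * ‖Uᵀ *ᵥ W‖ ^ 2 / η)) / 4)) ≤
      (codebookMeasure n ⌊(2 : ℝ) ^ (n * (R + ε))⌋₊).real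
        {C | 1 / n * (⨅ i, dSig (U * Matrix.diagonal lam * Uᵀ) W
            (tauDef lam (Uᵀ *ᵥ W) (Trc lam R) • C i)) ≤ DDrcV lam (Uᵀ *ᵥ W) R + η} := by
  have hSig : (U * Matrix.diagonal lam * Uᵀ).PosSemidef := by
    simpa using (PosSemidef.diagonal hlam).mul_mul_conjTranspose_same U
  have hp := half_exp_le_stdGaussian_dSig_le hn hU hlam hsum W hR hη hsmall
  have hM : (2 : ℝ) ^ (n * (R + ε)) / 2 ≤ ⌊(2 : ℝ) ^ (n * (R + ε))⌋₊ :=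
    half_le_natFloor (one_le_rpow one_le_two (by positivity))
  have hproduct : (2 : ℝ) ^ (n * ε) * exp (-(6 * ‖Uᵀ *ᵥ W‖ ^ 2 / η)) / 4 =
      (2 : ℝ) ^ (n * (R + ε)) / 2 * (exp (-(n * R * log 2) - 6 * ‖Uᵀ *ᵥ W‖ ^ 2 / η) / 2) := by
    rw [rpow_def_of_pos two_pos, rpow_def_of_pos two_pos, div_mul_div_comm, ← exp_add, ← exp_add]
    ring_nf
  refine le_trans ?_ (one_sub_exp_neg_mul_le_codebookMeasure_iInf_dSig_le hSig hn _ W _ _)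
  rw [hproduct]
  gcongr

end Codebook

section Asymptotics

open Filter

lemma eventually_natCast_rpow_le_const_mul {β K : ℝ} (hβ : β < 1) (hK : 0 < K) :
    ∀ᶠ n : ℕ in atTop, (n : ℝ) ^ β ≤ K * n := by
  have hlimit := (tendsto_rpow_neg_atTop (sub_pos.2 hβ)).comp tendsto_natCast_atTop_atTop
  filter_upwards [hlimit.eventually_le_const hK, eventually_gt_atTop 0] with n hle hn
  calc (n : ℝ) ^ β = (n : ℝ) ^ (-(1 - β)) * n := by
        rw [neg_sub, rpow_sub_one (by positivity), div_mul_cancel₀ _ (by positivity)]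
    _ ≤ K * n := by gcongr; exact hle

lemma two_rpow_le_two_rpow_mul_exp {x ε η α N : ℝ} (hε : 0 < ε) (hη : 0 < η) (hα : 0 ≤ α)
    (hx : 1 ≤ x) (hN : 0 ≤ N) (hNx : N ≤ x ^ α) :
    (2 : ℝ) ^ (x * ε * (1 - (2 + 9 / η) / ε * x ^ (4 * α - 1))) ≤
      (2 : ℝ) ^ (x * ε) * exp (-(6 * N ^ 2 / η)) / 4 := by
  have hx0 : 0 < x := by linarith
  have hpow : 1 ≤ x ^ (4 * α) := one_le_rpow hx (by positivity)
  have hsq : N ^ 2 ≤ x ^ (4 * α) :=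
    calc N ^ 2 ≤ (x ^ α) ^ 2 := by gcongr
      _ = x ^ (2 * α) := by rw [← rpow_mul_natCast hx0.le]; ring_nf
      _ ≤ x ^ (4 * α) := rpow_le_rpow_of_exponent_le hx (by linarith)
  have hexponent : x * ε * (1 - (2 + 9 / η) / ε * x ^ (4 * α - 1)) =
      x * ε - 2 * x ^ (4 * α) - 9 * x ^ (4 * α) / η := by
    rw [rpow_sub_one hx0.ne']
    field_simp
    ring
  have hlog : 6 ≤ 9 * log 2 := by linarith [log_two_gt_d9]
  have hloss : 6 * N ^ 2 / (η * log 2) ≤ 9 * x ^ (4 * α) / η :=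
    calc 6 * N ^ 2 / (η * log 2) ≤ 9 * log 2 * x ^ (4 * α) / (η * log 2) := by gcongr
      _ = 9 * x ^ (4 * α) / η := by field_simp
  have hexp : exp (-(6 * N ^ 2 / η)) = ((2 : ℝ) ^ (6 * N ^ 2 / (η * log 2)))⁻¹ := by
    rw [rpow_def_of_pos two_pos, ← exp_neg]
    field_simp
  calc (2 : ℝ) ^ (x * ε * (1 - (2 + 9 / η) / ε * x ^ (4 * α - 1)))
      ≤ (2 : ℝ) ^ (x * ε - 6 * N ^ 2 / (η * log 2) - 2) := by
        rw [hexponent]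
        exact rpow_le_rpow_of_exponent_le one_le_two (by linarith)
    _ = (2 : ℝ) ^ (x * ε) * exp (-(6 * N ^ 2 / η)) / 4 := by
        rw [rpow_sub two_pos, rpow_sub two_pos, hexp, rpow_two]
        norm_num [div_eq_mul_inv]

end Asymptotics

/-- Gaussian codebook success (Lemma on random Gaussian code).
The sup norm `‖·‖` on `Fin n → ℝ` is `‖·‖∞`. -/
theorem stmt_6 (Rstar ε η α : ℝ) (hRstar : 0 < Rstar) (hε : 0 < ε) (hη : 0 < η)
    (hα : 0 < α) (hα4 : α < 1 / 4) :
    ∃ c : ℝ, 0 < c ∧ ∃ n₀ : ℕ, ∀ n : ℕ, n₀ ≤ n →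
      ∀ (W : Fin n → ℝ) (Sig U : Matrix (Fin n) (Fin n) ℝ) (lam : Fin n → ℝ),
        U * Uᵀ = 1 → Sig = U * Matrix.diagonal lam * Uᵀ →
        (∀ i, 0 ≤ lam i) → (∑ i, lam i) = (n : ℝ) →
        ‖Uᵀ.mulVec W‖ ≤ (n : ℝ) ^ α →
        1 - Real.exp (-(2 : ℝ) ^ ((n : ℝ) * ε * (1 - c * (n : ℝ) ^ (4 * α - 1)))) ≤
          (codebookMeasure n ⌊(2 : ℝ) ^ ((n : ℝ) * (Rstar + ε))⌋₊
            {C | (1 / (n : ℝ)) *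
                (⨅ i, dSig Sig W (tauDef lam (Uᵀ.mulVec W) (Trc lam Rstar) • C i))
              ≤ DDrcV lam (Uᵀ.mulVec W) Rstar + η}).toReal := by
  have hlarge : ∀ᶠ n : ℕ in Filter.atTop,
      0 < n ∧ (n : ℝ) ^ (4 * α) ≤ Rstar * log 2 * η ^ 2 / 6 * n :=
    (Filter.eventually_gt_atTop 0).and <|
      eventually_natCast_rpow_le_const_mul (by linarith) (by positivity)
  obtain ⟨n₀, hn₀⟩ := Filter.eventually_atTop.1 hlarge
  refine ⟨(2 + 9 / η) / ε, by positivity, n₀, ?_⟩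
  rintro n hn W _ U lam hU rfl hlam hsum hW
  obtain ⟨hpos, hpow⟩ := hn₀ n hn
  have hsmall : 6 * ‖Uᵀ *ᵥ W‖ ^ 4 ≤ Rstar * log 2 * n * η ^ 2 :=
    calc 6 * ‖Uᵀ *ᵥ W‖ ^ 4 ≤ 6 * ((n : ℝ) ^ α) ^ 4 := by gcongr
      _ = 6 * (n : ℝ) ^ (4 * α) := by rw [← rpow_mul_natCast n.cast_nonneg]; ring_nf
      _ ≤ Rstar * log 2 * n * η ^ 2 := by linarith
  have hrate := two_rpow_le_two_rpow_mul_exp hε hη hα.le (Nat.one_le_cast.2 hpos) (norm_nonneg _) hW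
  exact (sub_le_sub_left (exp_le_exp.2 (neg_le_neg hrate)) 1).trans <|
    one_sub_exp_le_codebookMeasure_iInf_dSig_le hpos hU hlam hsum W hRstar hη (by positivity) hsmall
end

section
/- Fix constants R*, ε, δ, α > 0 and let (W, Σ) be admissible with parameter α. Let c₁,…,c_M be i.i.d. N(0, Iₙ) with M = ⌊2^{n(R*+ε)}⌋, let τ = τ(W, Σ), and let q ∈ ℝ satisfy |q − τ| ≤ δ n^α. There is a universal constant C > 0 such that for every t > 1/n, with probability at least 1 − 2^{n(R*+ε)} exp(−C t) over the codewords, simultaneously for every i ∈ [M]: d_Σ(W, q cᵢ) ≤ ( √(d_Σ(W, τ cᵢ)) + δ n^α √(n(1+t)) )². -/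
open MeasureTheory Matrix Real

/-! Since `√(d_Σ)` is a seminorm of the difference, `√(d_Σ(w, q c))` and `√(d_Σ(w, τ c))` differ
by at most `|q - τ| * √(cᵀ Σ c)`, so a union bound over the codewords reduces everything to the
tail `P(cᵀ Σ c > (1 + t) tr Σ) ≤ exp (-C t)` for a single Gaussian `c`. In an eigenbasis of `Σ`,
`cᵀ Σ c` is a weighted chi-square. Chernoff's bound gives the factor `exp ((1 - t) / 4)`, which is
useless for small `t`; there the absence of a prefactor forces an anti-concentration estimate,
namely that `cᵀ Σ c` is at most its mean with probability bounded below, uniformly in the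
dimension and in `Σ`. This is Paley–Zygmund applied to `exp (s cᵀ Σ c)` for a suitable `s < 0`. -/

open ProbabilityTheory (gaussianReal gaussianPDFReal mgf HasLaw iIndepFun)

section ScalarBounds

variable {u : ℝ}

lemma inv_sqrt_one_sub_two_mul_le_exp (hu : u ≤ 1 / 4) :
    (√(1 - 2 * u))⁻¹ ≤ exp (u + 4 * u ^ 2) := by
  have hpos : 0 < 1 - 2 * u := by linarith
  have hinv : (1 - 2 * u)⁻¹ ≤ 2 * (u + 4 * u ^ 2) + 1 := by
    rw [inv_le_iff_one_le_mul₀ hpos]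
    nlinarith [mul_nonneg (sq_nonneg u) (sub_nonneg.2 hu)]
  calc (√(1 - 2 * u))⁻¹ = √(1 - 2 * u)⁻¹ := (sqrt_inv _).symm
    _ ≤ √(exp (2 * (u + 4 * u ^ 2))) := sqrt_le_sqrt (hinv.trans (add_one_le_exp _))
    _ = exp (u + 4 * u ^ 2) := by rw [← exp_half]; congr 1; ring

lemma exp_le_inv_sqrt_one_sub_two_mul (hu : -(1 / 2) ≤ u) (hu₀ : u ≤ 0) :
    exp (u + u ^ 2 / 2) ≤ (√(1 - 2 * u))⁻¹ := by
  have hsq : 2 ≤ (2 + u) ^ 2 := by nlinarith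
  have hlin : 1 - 2 * u ≤ exp (-(2 * u + u ^ 2)) := by
    refine le_trans ?_ (quadratic_le_exp_of_nonneg (by nlinarith))
    nlinarith [mul_nonneg (sq_nonneg u) (sub_nonneg.2 hsq)]
  have hsqrt : √(1 - 2 * u) ≤ exp (-(u + u ^ 2 / 2)) := by
    rw [show -(u + u ^ 2 / 2) = -(2 * u + u ^ 2) / 2 by ring, exp_half]
    exact sqrt_le_sqrt hlin
  rw [← neg_neg (u + u ^ 2 / 2), exp_neg]
  exact inv_anti₀ (sqrt_pos.2 (by linarith)) hsqrt

end ScalarBounds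

section PaleyZygmund

variable {Ω : Type*} [MeasurableSpace Ω] {μ : Measure Ω} {Z : Ω → ℝ}

lemma sq_setIntegral_le_integral_sq_mul_measureReal [IsFiniteMeasure μ] (hZ : MemLp Z 2 μ)
    (s : Set Ω) :
    (∫ ω in s, Z ω ∂μ) ^ 2 ≤ (∫ ω, Z ω ^ 2 ∂μ) * μ.real s := by
  have hint : Integrable Z μ := hZ.integrable one_le_two
  have hdiscrim := discrim_le_zero (a := μ.real s) (b := 2 * ∫ ω in s, Z ω ∂μ)
    (c := ∫ ω in s, Z ω ^ 2 ∂μ) fun x ↦ by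
      have hexpand : ∫ ω in s, (x + Z ω) ^ 2 ∂μ =
          μ.real s * (x * x) + 2 * (∫ ω in s, Z ω ∂μ) * x + ∫ ω in s, Z ω ^ 2 ∂μ := by
        simp_rw [add_sq]
        have hlin : IntegrableOn (fun ω ↦ x ^ 2 + 2 * x * Z ω) s μ :=
          (integrable_const _).add (hint.integrableOn.const_mul _)
        rw [integral_add hlin hZ.integrable_sq.integrableOn,
          integral_add (integrable_const _) (hint.integrableOn.const_mul _), integral_const_mul]
        simp only [integral_const, measureReal_restrict_apply_univ, smul_eq_mul]
        ring
      rw [← hexpand]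
      positivity
  have hmono : ∫ ω in s, Z ω ^ 2 ∂μ ≤ ∫ ω, Z ω ^ 2 ∂μ :=
    setIntegral_le_integral hZ.integrable_sq (ae_of_all _ fun ω ↦ sq_nonneg (Z ω))
  have := mul_le_mul_of_nonneg_right hmono (measureReal_nonneg (μ := μ) (s := s))
  rw [discrim] at hdiscrim
  linarith

theorem paley_zygmund [IsProbabilityMeasure μ] (hZ : MemLp Z 2 μ) {θ : ℝ} (hθ : 0 ≤ θ)
    (hmean : θ ≤ ∫ ω, Z ω ∂μ) :
    (∫ ω, Z ω ∂μ - θ) ^ 2 ≤ (∫ ω, Z ω ^ 2 ∂μ) * μ.real {ω | θ ≤ Z ω} := by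
  have hint : Integrable Z μ := hZ.integrable one_le_two
  have hs : NullMeasurableSet {ω | θ ≤ Z ω} μ :=
    nullMeasurableSet_le aemeasurable_const hint.aemeasurable
  refine le_trans (pow_le_pow_left₀ (sub_nonneg.2 hmean) ?_ 2)
    (sq_setIntegral_le_integral_sq_mul_measureReal hZ _)
  calc ∫ ω, Z ω ∂μ - θ = ∫ ω, (Z ω - θ) ∂μ := by
        simp [integral_sub hint (integrable_const θ)]
    _ ≤ ∫ ω, {ω | θ ≤ Z ω}.indicator Z ω ∂μ := by
        refine integral_mono (hint.sub (integrable_const θ)) (hint.indicator₀ hs) fun ω ↦ ?_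
        by_cases hω : θ ≤ Z ω
        · simpa [hω] using hθ
        · simpa [hω] using (not_le.1 hω).le
    _ = ∫ ω in {ω | θ ≤ Z ω}, Z ω ∂μ := integral_indicator₀ hs

lemma sq_mgf_sub_exp_le_mgf_mul_measureReal [IsProbabilityMeasure μ] {X : Ω → ℝ} {m s : ℝ}
    (hX : AEMeasurable X μ) (hs : s < 0) (hint : Integrable (fun ω ↦ exp (2 * s * X ω)) μ)
    (hmean : exp (s * m) ≤ mgf X μ s) :
    (mgf X μ s - exp (s * m)) ^ 2 ≤ mgf X μ (2 * s) * μ.real {ω | X ω ≤ m} := by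
  have hsq (ω : Ω) : exp (s * X ω) ^ 2 = exp (2 * s * X ω) := by
    rw [← exp_nat_mul]
    ring_nf
  have hmem : MemLp (fun ω ↦ exp (s * X ω)) 2 μ :=
    (memLp_two_iff_integrable_sq (by fun_prop)).2 (by simpa only [hsq] using hint)
  have hevent : {ω | exp (s * m) ≤ exp (s * X ω)} = {ω | X ω ≤ m} := by
    ext ω
    simp [mul_le_mul_left_of_neg hs]
  simpa only [hsq, hevent, mgf] using paley_zygmund hmem (exp_pos _).le hmean

lemma sq_le_exp_mul_measureReal_le_of_le_mgf [IsProbabilityMeasure μ] {X : Ω → ℝ}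
    {m s κ K : ℝ} (hX : AEMeasurable X μ) (hs : s < 0)
    (hint : Integrable (fun ω ↦ exp (2 * s * X ω)) μ) (hκ : 0 ≤ κ)
    (hfirst : exp (s * m + κ) ≤ mgf X μ s) (hsecond : mgf X μ (2 * s) ≤ exp (2 * (s * m) + K)) :
    κ ^ 2 ≤ exp K * μ.real {ω | X ω ≤ m} := by
  have hgap : exp (s * m) * κ ≤ mgf X μ s - exp (s * m) := by
    rw [exp_add] at hfirst
    nlinarith [exp_pos (s * m), add_one_le_exp κ]
  have hgap_nonneg : 0 ≤ exp (s * m) * κ := by positivity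
  refine le_of_mul_le_mul_left ?_ (pow_pos (exp_pos (s * m)) 2)
  calc exp (s * m) ^ 2 * κ ^ 2 = (exp (s * m) * κ) ^ 2 := (mul_pow _ _ 2).symm
    _ ≤ (mgf X μ s - exp (s * m)) ^ 2 := by gcongr
    _ ≤ mgf X μ (2 * s) * μ.real {ω | X ω ≤ m} :=
        sq_mgf_sub_exp_le_mgf_mul_measureReal hX hs hint (by linarith)
    _ ≤ exp (2 * (s * m) + K) * μ.real {ω | X ω ≤ m} := by gcongr
    _ = exp (s * m) ^ 2 * (exp K * μ.real {ω | X ω ≤ m}) := by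
        rw [exp_add, ← exp_nat_mul, mul_assoc, Nat.cast_ofNat]

end PaleyZygmund

section UnionBound

lemma one_sub_sum_measureReal_compl_le_measureReal_iInter {ι Ω : Type*} [Fintype ι]
    [MeasurableSpace Ω] {μ : Measure Ω} [IsProbabilityMeasure μ] (A : ι → Set Ω) :
    1 - ∑ i, μ.real (A i)ᶜ ≤ μ.real (⋂ i, A i) := by
  have hunion : μ.real (⋂ i, A i)ᶜ ≤ ∑ i, μ.real (A i)ᶜ := by
    rw [Set.compl_iInter]
    exact measureReal_iUnion_fintype_le _
  have hcover : 1 ≤ μ.real (⋂ i, A i) + μ.real (⋂ i, A i)ᶜ := by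
    simpa only [Set.union_compl_self, probReal_univ] using
      measureReal_union_le (μ := μ) (⋂ i, A i) (⋂ i, A i)ᶜ
  linarith

end UnionBound

section WeightedChiSquare

lemma mgf_sq_gaussianReal {s : ℝ} (hs : s < 1 / 2) :
    mgf (fun x ↦ x ^ 2) (gaussianReal 0 1) s = (√(1 - 2 * s))⁻¹ := by
  have hpdf (x : ℝ) : gaussianPDFReal 0 1 x * exp (s * x ^ 2) =
      (√(2 * π))⁻¹ * exp (-(1 / 2 - s) * x ^ 2) := by
    simp only [gaussianPDFReal, NNReal.coe_one, mul_one, sub_zero]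
    rw [mul_assoc, ← exp_add]
    ring_nf
  rw [mgf, ProbabilityTheory.integral_gaussianReal_eq_integral_smul one_ne_zero]
  simp only [smul_eq_mul, hpdf]
  rw [integral_const_mul, integral_gaussian, ← sqrt_inv, ← sqrt_mul (by positivity), ← sqrt_inv]
  have : 1 / 2 - s ≠ 0 := by linarith
  have : 1 - 2 * s ≠ 0 := by linarith
  congr 1
  field_simp

/-- The random variable `∑ i, a i * g i ^ 2`, a weighted chi-square when the `g i` are independent
standard Gaussians. -/
def weightedSumSq {ι Ω : Type*} [Fintype ι] (a : ι → ℝ) (g : ι → Ω → ℝ) (ω : Ω) : ℝ :=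
  ∑ i, a i * g i ω ^ 2

variable {ι Ω : Type*} [Fintype ι] [MeasurableSpace Ω] {μ : Measure Ω} {g : ι → Ω → ℝ}
  {a : ι → ℝ} {s t : ℝ}

lemma aemeasurable_weightedSumSq (hlaw : ∀ i, HasLaw (g i) (gaussianReal 0 1) μ) :
    AEMeasurable (weightedSumSq a g) μ :=
  Finset.aemeasurable_fun_sum _ fun i _ ↦ ((hlaw i).aemeasurable.pow_const 2).const_mul (a i)

lemma mgf_weightedSumSq (hg : iIndepFun g μ) (hlaw : ∀ i, HasLaw (g i) (gaussianReal 0 1) μ)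
    (hs : ∀ i, s * a i < 1 / 2) :
    mgf (weightedSumSq a g) μ s = ∏ i, (√(1 - 2 * (s * a i)))⁻¹ := by
  have hindep : iIndepFun (fun i ω ↦ a i * g i ω ^ 2) μ :=
    hg.comp (fun i x ↦ a i * x ^ 2) fun _ ↦ by fun_prop
  have hsum : weightedSumSq a g = ∑ i, fun ω ↦ a i * g i ω ^ 2 := by
    ext ω
    simp [weightedSumSq]
  rw [hsum, hindep.mgf_sum₀ fun i ↦ ((hlaw i).aemeasurable.pow_const 2).const_mul (a i)]
  refine Finset.prod_congr rfl fun i _ ↦ ?_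
  rw [ProbabilityTheory.mgf_const_mul, mul_comm, ← mgf_sq_gaussianReal (hs i),
    ← (hlaw i).map_eq, ProbabilityTheory.mgf_map (hlaw i).aemeasurable (by fun_prop)]
  rfl

lemma integrable_exp_mul_weightedSumSq (hg : iIndepFun g μ)
    (hlaw : ∀ i, HasLaw (g i) (gaussianReal 0 1) μ) (hs : ∀ i, s * a i < 1 / 2) :
    Integrable (fun ω ↦ exp (s * weightedSumSq a g ω)) μ := by
  have := hg.isProbabilityMeasure
  rw [← ProbabilityTheory.mgf_pos_iff, mgf_weightedSumSq hg hlaw hs]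
  exact Finset.prod_pos fun i _ ↦ inv_pos.2 (sqrt_pos.2 (by linarith [hs i]))

lemma mgf_weightedSumSq_le (hg : iIndepFun g μ) (hlaw : ∀ i, HasLaw (g i) (gaussianReal 0 1) μ)
    (hs : ∀ i, s * a i ≤ 1 / 4) :
    mgf (weightedSumSq a g) μ s ≤ exp (s * ∑ i, a i + 4 * s ^ 2 * ∑ i, a i ^ 2) := by
  rw [mgf_weightedSumSq hg hlaw fun i ↦ (hs i).trans_lt (by norm_num)]
  calc ∏ i, (√(1 - 2 * (s * a i)))⁻¹ ≤ ∏ i, exp (s * a i + 4 * (s * a i) ^ 2) :=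
        Finset.prod_le_prod (fun i _ ↦ by positivity)
          fun i _ ↦ inv_sqrt_one_sub_two_mul_le_exp (hs i)
    _ = exp (s * ∑ i, a i + 4 * s ^ 2 * ∑ i, a i ^ 2) := by
        simp_rw [← exp_sum, Finset.sum_add_distrib, Finset.mul_sum, mul_pow, mul_assoc]

lemma exp_le_mgf_weightedSumSq (hg : iIndepFun g μ)
    (hlaw : ∀ i, HasLaw (g i) (gaussianReal 0 1) μ) (hs : ∀ i, -(1 / 2) ≤ s * a i)
    (hs₀ : ∀ i, s * a i ≤ 0) :
    exp (s * ∑ i, a i + s ^ 2 / 2 * ∑ i, a i ^ 2) ≤ mgf (weightedSumSq a g) μ s := by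
  rw [mgf_weightedSumSq hg hlaw fun i ↦ (hs₀ i).trans_lt (by norm_num)]
  calc exp (s * ∑ i, a i + s ^ 2 / 2 * ∑ i, a i ^ 2) =
        ∏ i, exp (s * a i + (s * a i) ^ 2 / 2) := by
        simp_rw [← exp_sum, Finset.sum_add_distrib, Finset.mul_sum, mul_pow, mul_div_right_comm]
    _ ≤ ∏ i, (√(1 - 2 * (s * a i)))⁻¹ :=
        Finset.prod_le_prod (fun i _ ↦ by positivity)
          fun i _ ↦ exp_le_inv_sqrt_one_sub_two_mul (hs i) (hs₀ i)

lemma measureReal_weightedSumSq_ge_le (hg : iIndepFun g μ)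
    (hlaw : ∀ i, HasLaw (g i) (gaussianReal 0 1) μ) (ha : 0 < a) :
    μ.real {ω | (1 + t) * ∑ i, a i ≤ weightedSumSq a g ω} ≤ exp ((1 - t) / 4) := by
  have := hg.isProbabilityMeasure
  set S := ∑ i, a i
  have hS_pos : 0 < S := Fintype.sum_pos ha
  have ha_le (i : ι) : a i ≤ S := Finset.single_le_sum (fun j _ ↦ ha.le j) (Finset.mem_univ i)
  have hs (i : ι) : 1 / (4 * S) * a i ≤ 1 / 4 := by
    rw [div_mul_eq_mul_div, one_mul, div_le_iff₀ (by positivity)]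
    linarith [ha_le i]
  have hsum_sq : ∑ i, a i ^ 2 ≤ S ^ 2 := Finset.sum_sq_le_sq_sum_of_nonneg fun i _ ↦ ha.le i
  calc μ.real {ω | (1 + t) * S ≤ weightedSumSq a g ω}
      ≤ exp (-(1 / (4 * S)) * ((1 + t) * S)) * mgf (weightedSumSq a g) μ (1 / (4 * S)) :=
        ProbabilityTheory.measure_ge_le_exp_mul_mgf _ (by positivity)
          (integrable_exp_mul_weightedSumSq hg hlaw fun i ↦ (hs i).trans_lt (by norm_num))
    _ ≤ exp (-(1 / (4 * S)) * ((1 + t) * S)) *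
          exp (1 / (4 * S) * S + 4 * (1 / (4 * S)) ^ 2 * S ^ 2) := by
        gcongr
        refine (mgf_weightedSumSq_le hg hlaw hs).trans ?_
        gcongr
    _ = exp ((1 - t) / 4) := by
        rw [← exp_add]
        congr 1
        field_simp
        ring

lemma le_measureReal_weightedSumSq_le_sum (hg : iIndepFun g μ)
    (hlaw : ∀ i, HasLaw (g i) (gaussianReal 0 1) μ) (ha : 0 < a) :
    1 / 3072 ≤ μ.real {ω | weightedSumSq a g ω ≤ ∑ i, a i} := by
  have := hg.isProbabilityMeasure
  set V := √(∑ i, a i ^ 2)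
  have hV_sq : ∑ i, a i ^ 2 = V ^ 2 :=
    (sq_sqrt (Finset.sum_nonneg fun i _ ↦ sq_nonneg (a i))).symm
  have hV_pos : 0 < V := by
    obtain ⟨i, hi⟩ := (Pi.lt_def.1 ha).2
    exact sqrt_pos.2 <| Finset.sum_pos' (fun j _ ↦ sq_nonneg (a j))
      ⟨i, Finset.mem_univ i, pow_pos hi 2⟩
  have ha_le (i : ι) : a i ≤ V :=
    le_sqrt_of_sq_le (Finset.single_le_sum (fun j _ ↦ sq_nonneg (a j)) (Finset.mem_univ i))
  -- Any `s` of order `-1 / V` works: both exponents below then differ from `s * ∑ i, a i` and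
  -- `2 * (s * ∑ i, a i)` by absolute constants.
  obtain ⟨s, hsV⟩ : ∃ s : ℝ, s * V = -(1 / 4) := ⟨-(1 / 4) / V, by field_simp⟩
  have hs_neg : s < 0 := by nlinarith
  have hsa_nonpos (i : ι) : s * a i ≤ 0 := mul_nonpos_of_nonpos_of_nonneg hs_neg.le (ha.le i)
  have hsa_ge (i : ι) : -(1 / 2) ≤ s * a i := by nlinarith [ha_le i]
  have h2sa (i : ι) : 2 * s * a i ≤ 1 / 4 := by linarith [hsa_nonpos i]
  have hs_sq : s ^ 2 * ∑ i, a i ^ 2 = 1 / 16 := by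
    rw [hV_sq, ← mul_pow, hsV]
    norm_num
  have hfirst : exp (s * ∑ i, a i + 1 / 32) ≤ mgf (weightedSumSq a g) μ s := by
    have hquad : s ^ 2 / 2 * ∑ i, a i ^ 2 = 1 / 32 := by linear_combination hs_sq / 2
    simpa only [hquad] using exp_le_mgf_weightedSumSq hg hlaw hsa_ge hsa_nonpos
  have hsecond : mgf (weightedSumSq a g) μ (2 * s) ≤ exp (2 * (s * ∑ i, a i) + 1) := by
    have hquad : 4 * (2 * s) ^ 2 * ∑ i, a i ^ 2 = 1 := by linear_combination 16 * hs_sq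
    simpa only [hquad, mul_assoc] using mgf_weightedSumSq_le hg hlaw h2sa
  have hpz := sq_le_exp_mul_measureReal_le_of_le_mgf (aemeasurable_weightedSumSq hlaw) hs_neg
    (integrable_exp_mul_weightedSumSq hg hlaw fun i ↦ (h2sa i).trans_lt (by norm_num))
    (by norm_num) hfirst hsecond
  have hp : 0 ≤ μ.real {ω | weightedSumSq a g ω ≤ ∑ i, a i} := measureReal_nonneg
  nlinarith [exp_one_lt_three]

theorem measureReal_lt_weightedSumSq_le_exp (hg : iIndepFun g μ)
    (hlaw : ∀ i, HasLaw (g i) (gaussianReal 0 1) μ) (ha : 0 ≤ a) (ht : 0 ≤ t) :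
    μ.real {ω | (1 + t) * ∑ i, a i < weightedSumSq a g ω} ≤ exp (-(1 / 6144) * t) := by
  have := hg.isProbabilityMeasure
  have hX : AEMeasurable (weightedSumSq a g) μ := aemeasurable_weightedSumSq hlaw
  have hsum : 0 ≤ ∑ i, a i := Finset.sum_nonneg fun i _ ↦ ha i
  rcases ha.eq_or_lt with rfl | ha_pos
  · simpa [weightedSumSq] using (exp_pos _).le
  rcases le_total t 2 with ht_small | ht_large
  · calc μ.real {ω | (1 + t) * ∑ i, a i < weightedSumSq a g ω}
        ≤ μ.real {ω | weightedSumSq a g ω ≤ ∑ i, a i}ᶜ := by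
          refine measureReal_mono fun ω hω ↦ ?_
          simp only [Set.mem_ofPred_eq, Set.mem_compl_iff, not_le] at hω ⊢
          exact (le_mul_of_one_le_left hsum (by linarith)).trans_lt hω
      _ = 1 - μ.real {ω | weightedSumSq a g ω ≤ ∑ i, a i} :=
          probReal_compl_eq_one_sub₀ (nullMeasurableSet_le hX aemeasurable_const)
      _ ≤ -(1 / 6144) * t + 1 := by
          linarith [le_measureReal_weightedSumSq_le_sum hg hlaw ha_pos]
      _ ≤ exp (-(1 / 6144) * t) := add_one_le_exp _
  · calc μ.real {ω | (1 + t) * ∑ i, a i < weightedSumSq a g ω}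
        ≤ μ.real {ω | (1 + t) * ∑ i, a i ≤ weightedSumSq a g ω} :=
          measureReal_mono <| Set.ofPred_subset_ofPred.2 fun _ ↦ le_of_lt
      _ ≤ exp ((1 - t) / 4) := measureReal_weightedSumSq_ge_le hg hlaw ha_pos
      _ ≤ exp (-(1 / 6144) * t) := exp_le_exp.2 (by linarith)

end WeightedChiSquare

section DiagonalConjugation

lemma trace_mul_diagonal_mul_transpose {ι R : Type*} [Fintype ι] [DecidableEq ι] [CommRing R]
    {U : Matrix ι ι R} (hU : U * Uᵀ = 1) (lam : ι → R) :
    (U * diagonal lam * Uᵀ).trace = ∑ i, lam i := by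
  rw [trace_mul_cycle, mul_eq_one_comm.1 hU, one_mul, trace_diagonal]

lemma posSemidef_mul_diagonal_mul_transpose {ι κ : Type*} [Fintype ι] [DecidableEq ι] [Finite κ]
    {lam : ι → ℝ} (hlam : 0 ≤ lam) (U : Matrix κ ι ℝ) :
    (U * diagonal lam * Uᵀ).PosSemidef := by
  simpa using (PosSemidef.diagonal hlam).mul_mul_conjTranspose_same U

end DiagonalConjugation

section MahalanobisSeminorm

variable {ι : Type*} [Fintype ι]

lemma sqrt_dotProduct_mulVec_add_le {A : Matrix ι ι ℝ} (hA : A.PosSemidef) (x y : ι → ℝ) :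
    √((x + y) ⬝ᵥ A *ᵥ (x + y)) ≤ √(x ⬝ᵥ A *ᵥ x) + √(y ⬝ᵥ A *ᵥ y) := by
  rw [dotProduct_comm (x + y), dotProduct_comm x, dotProduct_comm y]
  exact @norm_add_le _ (A.toSeminormedAddCommGroup hA).toSeminormedAddGroup x y

lemma sqrt_smul_dotProduct_mulVec_smul (A : Matrix ι ι ℝ) (r : ℝ) (x : ι → ℝ) :
    √((r • x) ⬝ᵥ A *ᵥ (r • x)) = |r| * √(x ⬝ᵥ A *ᵥ x) := by
  rw [mulVec_smul, dotProduct_smul, smul_dotProduct, smul_eq_mul, smul_eq_mul, ← mul_assoc,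
    sqrt_mul (mul_self_nonneg r), sqrt_mul_self_eq_abs]

end MahalanobisSeminorm

section QuadraticForm

variable {n : ℕ} {Sig : Matrix (Fin n) (Fin n) ℝ} {t : ℝ}

instance inst_s9 : IsProbabilityMeasure (stdGaussian n) :=
  Measure.pi.instIsProbabilityMeasure _

lemma measurePreserving_sum_smul_orthonormalBasis
    (b : OrthonormalBasis (Fin n) ℝ (EuclideanSpace ℝ (Fin n))) :
    MeasurePreserving (fun x : Fin n → ℝ ↦ (∑ i, x i • b i).ofLp) (stdGaussian n)
      (stdGaussian n) where
  measurable := by fun_prop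
  map_eq := by
    have hbasis := ProbabilityTheory.stdGaussian_eq_map_pi_orthonormalBasis b
    rw [← ProbabilityTheory.map_pi_eq_stdGaussian] at hbasis
    change Measure.map (WithLp.ofLp ∘ fun x : Fin n → ℝ ↦ ∑ i, x i • b i) _ = _
    rw [← Measure.map_map (by fun_prop) (by fun_prop), stdGaussian, ← hbasis,
      Measure.map_map (by fun_prop) (by fun_prop)]
    exact Measure.map_id

lemma dotProduct_mulVec_sum_smul_eigenvectorBasis (hSig : Sig.IsHermitian) (x : Fin n → ℝ) :
    (∑ i, x i • hSig.eigenvectorBasis i).ofLp ⬝ᵥ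
        Sig *ᵥ (∑ i, x i • hSig.eigenvectorBasis i).ofLp =
      weightedSumSq hSig.eigenvalues (fun i y ↦ y i) x := by
  have hmul : Sig *ᵥ (∑ i, x i • hSig.eigenvectorBasis i).ofLp =
      (∑ i, (hSig.eigenvalues i * x i) • hSig.eigenvectorBasis i).ofLp := by
    simp [Matrix.mulVec_sum, Matrix.mulVec_smul, hSig.mulVec_eigenvectorBasis, smul_smul, mul_comm]
  have hinner := hSig.eigenvectorBasis.orthonormal.inner_sum
    (fun i ↦ hSig.eigenvalues i * x i) x Finset.univ
  rw [hmul]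
  simpa [EuclideanSpace.inner_eq_star_dotProduct, weightedSumSq, sq, mul_assoc] using hinner

theorem stdGaussian_real_lt_dotProduct_mulVec_le_exp (hSig : Sig.PosSemidef) (ht : 0 ≤ t) :
    (stdGaussian n).real {x | (1 + t) * Sig.trace < x ⬝ᵥ Sig *ᵥ x} ≤ exp (-(1 / 6144) * t) := by
  have hmeas : MeasurableSet {x : Fin n → ℝ | (1 + t) * Sig.trace < x ⬝ᵥ Sig *ᵥ x} :=
    measurableSet_lt measurable_const (by fun_prop)
  have hindep : iIndepFun (fun i (x : Fin n → ℝ) ↦ x i) (stdGaussian n) :=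
    ProbabilityTheory.iIndepFun_pi (X := fun _ ↦ id) fun _ ↦ aemeasurable_id
  have hlaw (i : Fin n) : HasLaw (fun x : Fin n → ℝ ↦ x i) (gaussianReal 0 1) (stdGaussian n) :=
    (measurePreserving_eval (fun _ : Fin n ↦ gaussianReal 0 1) i).hasLaw
  rw [← (measurePreserving_sum_smul_orthonormalBasis
    hSig.isHermitian.eigenvectorBasis).measureReal_preimage hmeas.nullMeasurableSet,
    hSig.isHermitian.trace_eq_sum_eigenvalues]
  simp only [Set.preimage_ofPred_eq, dotProduct_mulVec_sum_smul_eigenvectorBasis]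
  exact measureReal_lt_weightedSumSq_le_exp hindep hlaw hSig.eigenvalues_nonneg ht

lemma sqrt_dSig_smul_le (hSig : Sig.PosSemidef) (w c : Fin n → ℝ) (q τ : ℝ) :
    √(dSig Sig w (q • c)) ≤ √(dSig Sig w (τ • c)) + |q - τ| * √(c ⬝ᵥ Sig *ᵥ c) := by
  have hdecomp : w - q • c = (w - τ • c) + (τ - q) • c := by
    rw [sub_smul]
    abel
  rw [dSig, hdecomp, abs_sub_comm, ← sqrt_smul_dotProduct_mulVec_smul]
  exact sqrt_dotProduct_mulVec_add_le hSig _ _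

lemma dSig_smul_le_of_dotProduct_mulVec_le (hSig : Sig.PosSemidef) (w : Fin n → ℝ)
    {c : Fin n → ℝ} {q τ B D : ℝ} (hq : |q - τ| ≤ D) (hc : c ⬝ᵥ Sig *ᵥ c ≤ B) :
    dSig Sig w (q • c) ≤ (√(dSig Sig w (τ • c)) + D * √B) ^ 2 := by
  have hD : 0 ≤ D := (abs_nonneg _).trans hq
  refine (sqrt_le_left (by positivity)).1 ((sqrt_dSig_smul_le hSig w c q τ).trans ?_)
  gcongr

end QuadraticForm

section Codebook

variable {n M : ℕ}

instance : IsProbabilityMeasure (codebookMeasure n M) :=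
  Measure.pi.instIsProbabilityMeasure _

lemma hasLaw_eval_codebookMeasure (i : Fin M) :
    HasLaw (fun c ↦ c i) (stdGaussian n) (codebookMeasure n M) :=
  (measurePreserving_eval (fun _ : Fin M ↦ stdGaussian n) i).hasLaw

end Codebook

theorem stmt_9_general {Ω ι : Type*} [MeasurableSpace Ω] {μ : Measure Ω} [IsProbabilityMeasure μ]
    [Fintype ι] {n : ℕ} {c : ι → Ω → Fin n → ℝ} (hc : ∀ i, HasLaw (c i) (stdGaussian n) μ)
    {Sig : Matrix (Fin n) (Fin n) ℝ} (hSig : Sig.PosSemidef) (w : Fin n → ℝ) {q τ D t : ℝ}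
    (hq : |q - τ| ≤ D) (ht : 0 ≤ t) :
    1 - Fintype.card ι * exp (-(1 / 6144) * t) ≤
      μ.real {ω | ∀ i, dSig Sig w (q • c i ω) ≤
        (√(dSig Sig w (τ • c i ω)) + D * √((1 + t) * Sig.trace)) ^ 2} := by
  let E (i : ι) : Set Ω := {ω | c i ω ⬝ᵥ Sig *ᵥ c i ω ≤ (1 + t) * Sig.trace}
  have htail (i : ι) : μ.real (E i)ᶜ ≤ exp (-(1 / 6144) * t) := by
    have hmeas : MeasurableSet {x : Fin n → ℝ | (1 + t) * Sig.trace < x ⬝ᵥ Sig *ᵥ x} :=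
      measurableSet_lt measurable_const (by fun_prop)
    simp only [E, Set.compl_ofPred, not_le]
    exact ((hc i).measureReal_eq hmeas).trans_le
      (stdGaussian_real_lt_dotProduct_mulVec_le_exp hSig ht)
  calc 1 - Fintype.card ι * exp (-(1 / 6144) * t) ≤ 1 - ∑ i, μ.real (E i)ᶜ := by
        gcongr
        simpa using Finset.sum_le_sum fun i (_ : i ∈ Finset.univ) ↦ htail i
    _ ≤ μ.real (⋂ i, E i) := one_sub_sum_measureReal_compl_le_measureReal_iInter E
    _ ≤ _ := measureReal_mono fun _ hω i ↦
        dSig_smul_le_of_dotProduct_mulVec_le hSig w hq (Set.mem_iInter.1 hω i)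

/-- distortion incurred by quantizing `τ` to `q` with `|q - τ| ≤ δ n^α`.
The sup norm `‖·‖` on `Fin n → ℝ` is `‖·‖∞`. -/
theorem stmt_9 :
    ∃ C : ℝ, 0 < C ∧
      ∀ (n : ℕ) (Rstar ε δ α : ℝ), 0 < Rstar → 0 < ε → 0 < δ → 0 < α →
      ∀ (W : Fin n → ℝ) (Sig U : Matrix (Fin n) (Fin n) ℝ) (lam : Fin n → ℝ),
        U * Uᵀ = 1 → Sig = U * Matrix.diagonal lam * Uᵀ →
        (∀ i, 0 ≤ lam i) → (∑ i, lam i) = (n : ℝ) →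
        ‖Uᵀ.mulVec W‖ ≤ (n : ℝ) ^ α →
      ∀ q : ℝ, |q - tauDef lam (Uᵀ.mulVec W) (Trc lam Rstar)| ≤ δ * (n : ℝ) ^ α →
      ∀ t : ℝ, 1 / (n : ℝ) < t →
        1 - (2 : ℝ) ^ ((n : ℝ) * (Rstar + ε)) * Real.exp (-C * t) ≤
          (codebookMeasure n ⌊(2 : ℝ) ^ ((n : ℝ) * (Rstar + ε))⌋₊
            {c | ∀ i, dSig Sig W (q • c i) ≤
                (Real.sqrt (dSig Sig W (tauDef lam (Uᵀ.mulVec W) (Trc lam Rstar) • c i))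
                  + δ * (n : ℝ) ^ α * Real.sqrt ((n : ℝ) * (1 + t))) ^ 2}).toReal := by
  refine ⟨1 / 6144, by norm_num,
    fun n Rstar ε δ α _ _ _ _ W Sig U lam hU hSig hlam hsum _ q hq t ht ↦ ?_⟩
  subst hSig
  have ht₀ : 0 ≤ t := (one_div_nonneg.2 n.cast_nonneg).trans ht.le
  have hbound := stmt_9_general
    (hasLaw_eval_codebookMeasure (n := n) (M := ⌊(2 : ℝ) ^ (n * (Rstar + ε))⌋₊))
    (posSemidef_mul_diagonal_mul_transpose hlam U) W hq ht₀
  rw [trace_mul_diagonal_mul_transpose hU, hsum, Fintype.card_fin, mul_comm (1 + t)] at hbound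
  refine le_trans ?_ hbound
  gcongr
  exact Nat.floor_le (by positivity)
end
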